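/- arXiv:1209.3385 — 2 statements merged into one kernel-verified Lean document; each statement's English description precedes it below -/
import Mathlib

section
/- Fix α>0, 0<θ≤1 and 0<κ<θ/8, and let g(x)=∑_{j=3}^{q}c_j x^j be a polynomial with real coefficients whose lowest-order term has degree at least 3. Then ⟨exp{−∑_{j=−n}^{n}g(x_j/W)}⟩₀ → 1 as n→∞, where ⟨·⟩₀ is taken with the real parameter γ=α. -/
open MeasureTheory

/-- Extend `x : Fin m → ℝ` to `ℕ → ℝ` by zero. -/
noncomputable def pad (m : ℕ) (x : Fin m → ℝ) : ℕ → ℝ :=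
  fun j => if h : j < m then x ⟨j, h⟩ else 0

/-- The real weight `μ_α` on `ℝ^m`. -/
noncomputable def muR (m : ℕ) (W α : ℝ) (x : Fin m → ℝ) : ℝ :=
  Real.exp (-(1/2) * ∑ j ∈ Finset.Ico 1 m, (pad m x j - pad m x (j-1))^2
    - (α / W^2) * ∑ j ∈ Finset.range m, (pad m x j)^2)

/-- `W(n) = N^{(1+θ)/2}` where `N = 2n+1`, so `W² = N^{1+θ}`. -/
noncomputable def Wn (θ : ℝ) (n : ℕ) : ℝ := ((2 * (n : ℝ) + 1)) ^ ((1 + θ) / 2)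

/-- `δ(n) = W(n)^{−κ}`. -/
noncomputable def dl (θ κ : ℝ) (n : ℕ) : ℝ := (Wn θ n) ^ (-κ)

/-- The cube `{x : |x_i| ≤ r for all i}`. -/
def box (m : ℕ) (r : ℝ) : Set (Fin m → ℝ) := {x | ∀ i, |x i| ≤ r}

/-!
For a probability measure with density proportional to `exp (-Q)` on a symmetric convex body, `Q` a
quadratic form, Prékopa–Leindler and the parallelogram law give the dual transport inequality
`⟨e^φ⟩ ⟨e^ψ⟩ ≤ 1` whenever `φ x + ψ y ≤ Q (x - y) / 2` on the body. Linear `φ` and `ψ` show that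
linear functionals are sub-Gaussian; for the chain this gives `⟨∑ (x_j / W) ^ 4⟩ = O(N / W ^ 2)`,
which tends to `0`. Put `G = ∑ g (x_j / W)` and `R = C ∑ (x_j / W) ^ 4`. Odd terms of `G` average
to zero by symmetry, so `|⟨G⟩| ≤ ⟨R⟩` and `⟨e^{-G}⟩ ≥ 1 - ⟨G⟩ ≥ 1 - ⟨R⟩`. For the upper bound,
`φ = G - R` and `ψ = -G` are admissible: near zero, the cubic variation of `g` is absorbed by the
mass term `(α / W ^ 2) ∑ x_j ^ 2` of `Q` and by `R`. Hence
`⟨e^{-G}⟩ ≤ ⟨e^{G - R}⟩⁻¹ ≤ (1 - 2 ⟨R⟩)⁻¹`.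
-/

open Filter Set Topology
open scoped ENNReal NNReal Pointwise

section PrekopaLeindler

theorem volume_add_volume_le_of_isCompact {K L : Set ℝ} (hK : IsCompact K) (hL : IsCompact L)
    (hK₀ : K.Nonempty) (hL₀ : L.Nonempty) : volume K + volume L ≤ volume (K + L) := by
  obtain ⟨k, hk, hkmax⟩ := hK.exists_isGreatest hK₀
  obtain ⟨l, hl, hlmin⟩ := hL.exists_isLeast hL₀
  -- The translates `l + K` and `k + L` lie in `K + L` and meet only at `k + l`.
  have hinter : volume ((l +ᵥ K) ∩ (k +ᵥ L)) = 0 := by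
    refine measure_mono_null (t := {k + l}) ?_ (measure_singleton _)
    rintro _ ⟨⟨x, hx, rfl⟩, ⟨y, hy, hxy⟩⟩
    have hxk : x ≤ k := hkmax hx
    have hly : l ≤ y := hlmin hy
    simp only [vadd_eq_add, mem_singleton_iff] at hxy ⊢
    linarith
  have hunion : (l +ᵥ K) ∪ (k +ᵥ L) ⊆ K + L := by
    rintro _ (⟨x, hx, rfl⟩ | ⟨y, hy, rfl⟩)
    · exact ⟨x, hx, l, hl, add_comm x l⟩
    · exact ⟨k, hk, y, hy, rfl⟩
  calc volume K + volume L = volume (l +ᵥ K) + volume (k +ᵥ L) := by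
        rw [measure_vadd, measure_vadd]
    _ = volume ((l +ᵥ K) ∪ (k +ᵥ L)) := by
        rw [← measure_union_add_inter _ (hL.vadd k).measurableSet, hinter, add_zero]
    _ ≤ volume (K + L) := measure_mono hunion

theorem volume_add_volume_le {A B : Set ℝ} (hA : MeasurableSet A) (hB : MeasurableSet B)
    (hA₀ : A.Nonempty) (hB₀ : B.Nonempty) : volume A + volume B ≤ volume (A + B) := by
  obtain ⟨a, ha⟩ := hA₀
  obtain ⟨b, hb⟩ := hB₀
  rw [hA.measure_eq_iSup_isCompact, hB.measure_eq_iSup_isCompact]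
  simp only [iSup_and']
  refine ENNReal.biSup_add_biSup_le' ⟨∅, empty_subset _, isCompact_empty⟩
    ⟨∅, empty_subset _, isCompact_empty⟩ ?_
  rintro K ⟨hKA, hK⟩ L ⟨hLB, hL⟩
  calc volume K + volume L ≤ volume (insert a K) + volume (insert b L) := by
        gcongr <;> exact subset_insert _ _
    _ ≤ volume (insert a K + insert b L) :=
        volume_add_volume_le_of_isCompact (hK.insert a) (hL.insert b) (insert_nonempty _ _)
          (insert_nonempty _ _)
    _ ≤ volume (A + B) :=
        measure_mono (add_subset_add (insert_subset ha hKA) (insert_subset hb hLB))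

theorem ofReal_mul_volume_add_le {A B : Set ℝ} (hA : MeasurableSet A) (hB : MeasurableSet B)
    (hA₀ : A.Nonempty) (hB₀ : B.Nonempty) {a b : ℝ} (ha : 0 < a) (hb : 0 < b) :
    ENNReal.ofReal a * volume A + ENNReal.ofReal b * volume B ≤ volume (a • A + b • B) := by
  have h := volume_add_volume_le (hA.const_smul_of_ne_zero ha.ne')
    (hB.const_smul_of_ne_zero hb.ne') (hA₀.smul_set (a := a)) (hB₀.smul_set (a := b))
  simpa [Measure.addHaar_smul, abs_of_pos ha, abs_of_pos hb] using h

theorem rpow_mul_rpow_le_ofReal_mul_add (x y : ℝ≥0∞) {a b : ℝ} (ha : 0 < a) (hb : 0 < b)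
    (hab : a + b = 1) :
    x ^ a * y ^ b ≤ ENNReal.ofReal a * x + ENNReal.ofReal b * y := by
  have h := ENNReal.young_inequality (x ^ a) (y ^ b) (Real.HolderConjugate.inv_inv ha hb hab)
  rwa [ENNReal.rpow_rpow_inv ha.ne', ENNReal.rpow_rpow_inv hb.ne', ENNReal.ofReal_inv_of_pos ha,
    ENNReal.ofReal_inv_of_pos hb, div_eq_mul_inv, div_eq_mul_inv, inv_inv, inv_inv, mul_comm x,
    mul_comm y] at h

theorem lintegral_min_eq_mul_lintegral_meas_lt {Ω : Type*} [MeasurableSpace Ω] (μ : Measure Ω)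
    {f : Ω → ℝ≥0∞} (hf : Measurable f) {A : ℝ≥0∞} (hA₀ : A ≠ 0) (hA : A ≠ ⊤) :
    ∫⁻ x, min (f x) A ∂μ =
      A * ∫⁻ t in Ioo (0 : ℝ) 1, μ {x | A * ENNReal.ofReal t < f x} := by
  set φ : Ω → ℝ := fun x => (min (f x) A / A).toReal with hφ
  have hquot (x : Ω) : min (f x) A / A ≤ 1 := ENNReal.div_le_of_le_mul (by simp)
  have hmin (x : Ω) : min (f x) A = A * ENNReal.ofReal (φ x) := by
    rw [hφ, ENNReal.ofReal_toReal ((hquot x).trans_lt ENNReal.one_lt_top).ne,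
      ENNReal.mul_div_cancel hA₀ hA]
  have hφ_le (x : Ω) : φ x ≤ 1 := ENNReal.toReal_mono ENNReal.one_ne_top (hquot x)
  have hlevel {t : ℝ} (ht : t ∈ Ioo (0 : ℝ) 1) :
      {x | t < φ x} = {x | A * ENNReal.ofReal t < f x} := by
    ext x
    have hAt : A * ENNReal.ofReal t < A := by
      simpa using ENNReal.mul_lt_mul_right hA₀ hA (ENNReal.ofReal_lt_one.mpr ht.2)
    rw [mem_ofPred_eq, mem_ofPred_eq, ← ENNReal.ofReal_lt_ofReal_iff_of_nonneg ht.1.le,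
      ← ENNReal.mul_lt_mul_iff_right hA₀ hA, ← hmin, lt_min_iff, and_iff_left hAt]
  have hφm : Measurable φ := ((hf.min measurable_const).div_const A).ennreal_toReal
  have hempty {t : ℝ} (ht : t ∈ Ioi (0 : ℝ) \ Ioo 0 1) : μ {x | t < φ x} = 0 := by
    have ht1 : 1 ≤ t := not_lt.mp fun h => ht.2 ⟨ht.1, h⟩
    simp [(fun x => not_lt.mpr ((hφ_le x).trans ht1) : ∀ x, ¬ t < φ x)]
  simp only [hmin]
  rw [lintegral_const_mul _ hφm.ennreal_ofReal,
    lintegral_eq_lintegral_meas_lt μ (.of_forall fun _ => ENNReal.toReal_nonneg) hφm.aemeasurable,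
    ← setLIntegral_congr_fun measurableSet_Ioo fun t ht => congrArg μ (hlevel ht),
    ← lintegral_inter_add_sdiff _ (Ioi 0) measurableSet_Ioo, inter_eq_right.mpr Ioo_subset_Ioi_self,
    setLIntegral_congr_fun (measurableSet_Ioi.diff measurableSet_Ioo) fun t ht => hempty ht,
    lintegral_zero, add_zero]

theorem measurable_measure_mul_ofReal_lt {Ω : Type*} [MeasurableSpace Ω] (μ : Measure Ω)
    (f : Ω → ℝ≥0∞) (A : ℝ≥0∞) :
    Measurable fun t : ℝ => μ {x | A * ENNReal.ofReal t < f x} :=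
  Antitone.measurable fun _ _ hst => measure_mono fun _ hx =>
    (mul_le_mul_right (ENNReal.ofReal_le_ofReal hst) A).trans_lt hx

section Line

variable {f g h : ℝ → ℝ≥0∞} {a b : ℝ}

theorem smul_superlevel_add_smul_superlevel_subset (ha : 0 < a) (hb : 0 < b) (hab : a + b = 1)
    (hfgh : ∀ x y, f x ^ a * g y ^ b ≤ h (a * x + b * y)) (A B : ℝ≥0∞) (t : ℝ) :
    a • {x | A * ENNReal.ofReal t < f x} + b • {x | B * ENNReal.ofReal t < g x} ⊆
      {x | A ^ a * B ^ b * ENNReal.ofReal t < h x} := by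
  rintro _ ⟨_, ⟨x, hx, rfl⟩, _, ⟨y, hy, rfl⟩, rfl⟩
  calc A ^ a * B ^ b * ENNReal.ofReal t
      = (A * ENNReal.ofReal t) ^ a * (B * ENNReal.ofReal t) ^ b := by
        rw [ENNReal.mul_rpow_of_nonneg _ _ ha.le, ENNReal.mul_rpow_of_nonneg _ _ hb.le,
          mul_mul_mul_comm, ← ENNReal.rpow_add_of_nonneg _ _ ha.le hb.le, hab, ENNReal.rpow_one]
    _ < f x ^ a * g y ^ b :=
        ENNReal.mul_lt_mul (ENNReal.rpow_lt_rpow hx ha) (ENNReal.rpow_lt_rpow hy hb)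
    _ ≤ h (a * x + b * y) := hfgh x y

theorem rpow_lintegral_min_mul_le (hf : Measurable f) (hg : Measurable g) (hh : Measurable h)
    (ha : 0 < a) (hb : 0 < b) (hab : a + b = 1)
    (hfgh : ∀ x y, f x ^ a * g y ^ b ≤ h (a * x + b * y)) {A B : ℝ≥0∞}
    (hA : A ≠ ⊤) (hB : B ≠ ⊤) (hAf : A ≤ ⨆ x, f x) (hBg : B ≤ ⨆ x, g x) :
    (∫⁻ x, min (f x) A) ^ a * (∫⁻ x, min (g x) B) ^ b ≤ ∫⁻ x, h x := by
  rcases eq_or_ne A 0 with rfl | hA₀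
  · simp [ha]
  rcases eq_or_ne B 0 with rfl | hB₀
  · simp [hb]
  set C := A ^ a * B ^ b
  have hC₀ : C ≠ 0 := mul_ne_zero (by simp [hA₀, hA]) (by simp [hB₀, hB])
  have hC' : C ≠ ⊤ := ENNReal.mul_ne_top (ENNReal.rpow_ne_top_of_nonneg ha.le hA)
    (ENNReal.rpow_ne_top_of_nonneg hb.le hB)
  have exists_lt {u : ℝ → ℝ≥0∞} {M : ℝ≥0∞} (hM₀ : M ≠ 0) (hM : M ≠ ⊤) (hMu : M ≤ ⨆ x, u x)
      {t : ℝ} (ht : t < 1) : {x | M * ENNReal.ofReal t < u x}.Nonempty := by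
    refine lt_iSup_iff.mp (lt_of_lt_of_le ?_ hMu)
    simpa using ENNReal.mul_lt_mul_right hM₀ hM (ENNReal.ofReal_lt_one.mpr ht)
  have hlevel : ∀ t ∈ Ioo (0 : ℝ) 1,
      ENNReal.ofReal a * volume {x | A * ENNReal.ofReal t < f x} +
        ENNReal.ofReal b * volume {x | B * ENNReal.ofReal t < g x} ≤
      volume {x | C * ENNReal.ofReal t < h x} := by
    intro t ht
    refine (ofReal_mul_volume_add_le (measurableSet_lt measurable_const hf)
      (measurableSet_lt measurable_const hg) (exists_lt hA₀ hA hAf ht.2)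
      (exists_lt hB₀ hB hBg ht.2) ha hb).trans (measure_mono ?_)
    exact smul_superlevel_add_smul_superlevel_subset ha hb hab hfgh A B t
  rw [lintegral_min_eq_mul_lintegral_meas_lt volume hf hA₀ hA,
    lintegral_min_eq_mul_lintegral_meas_lt volume hg hB₀ hB,
    ENNReal.mul_rpow_of_nonneg _ _ ha.le, ENNReal.mul_rpow_of_nonneg _ _ hb.le, mul_mul_mul_comm]
  calc C * ((∫⁻ t in Ioo (0 : ℝ) 1, volume {x | A * ENNReal.ofReal t < f x}) ^ a *
          (∫⁻ t in Ioo (0 : ℝ) 1, volume {x | B * ENNReal.ofReal t < g x}) ^ b)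
      ≤ C * ∫⁻ t in Ioo (0 : ℝ) 1, volume {x | C * ENNReal.ofReal t < h x} := by
        gcongr
        refine (rpow_mul_rpow_le_ofReal_mul_add _ _ ha hb hab).trans ?_
        rw [← lintegral_const_mul _ (measurable_measure_mul_ofReal_lt _ _ _),
          ← lintegral_const_mul _ (measurable_measure_mul_ofReal_lt _ _ _),
          ← lintegral_add_left ((measurable_measure_mul_ofReal_lt _ _ _).const_mul _)]
        exact setLIntegral_mono (measurable_measure_mul_ofReal_lt _ _ _) hlevel
    _ = ∫⁻ x, min (h x) C := (lintegral_min_eq_mul_lintegral_meas_lt volume hh hC₀ hC').symm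
    _ ≤ ∫⁻ x, h x := lintegral_mono fun _ => min_le_left _ _

theorem lintegral_eq_iSup_lintegral_min {Ω : Type*} [MeasurableSpace Ω] (μ : Measure Ω)
    {f : Ω → ℝ≥0∞} (hf : Measurable f) :
    ∫⁻ x, f x ∂μ = ⨆ n : ℕ, ∫⁻ x, min (f x) (min n (⨆ y, f y)) ∂μ := by
  have hmin (n : ℕ) (x : Ω) : min (f x) (min n (⨆ y, f y)) = min (f x) n := by
    rw [min_comm (n : ℝ≥0∞), ← min_assoc, min_eq_left (le_iSup f x)]
  simp only [hmin]
  rw [← lintegral_iSup (fun n => hf.min measurable_const)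
    fun m n hmn x => min_le_min_left _ (Nat.cast_le.mpr hmn)]
  refine lintegral_congr fun x => ?_
  rw [← inf_iSup_eq, ENNReal.iSup_natCast, inf_top_eq]

theorem prekopa_leindler_real (hf : Measurable f) (hg : Measurable g) (hh : Measurable h)
    (ha : 0 < a) (hb : 0 < b) (hab : a + b = 1)
    (hfgh : ∀ x y, f x ^ a * g y ^ b ≤ h (a * x + b * y)) :
    (∫⁻ x, f x) ^ a * (∫⁻ x, g x) ^ b ≤ ∫⁻ x, h x := by
  have rpow_iSup {s : ℝ} (hs : 0 < s) (u : ℕ → ℝ≥0∞) : (⨆ n, u n) ^ s = ⨆ n, u n ^ s :=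
    (ENNReal.orderIsoRpow s hs).map_iSup u
  have min_ne_top (n : ℕ) (M : ℝ≥0∞) : min (n : ℝ≥0∞) M ≠ ⊤ :=
    ((min_le_left _ _).trans_lt (ENNReal.natCast_lt_top n)).ne
  rw [lintegral_eq_iSup_lintegral_min volume hf, lintegral_eq_iSup_lintegral_min volume hg,
    rpow_iSup ha, rpow_iSup hb]
  simp only [ENNReal.iSup_mul, ENNReal.mul_iSup]
  exact iSup₂_le fun m n =>
    rpow_lintegral_min_mul_le hf hg hh ha hb hab hfgh (min_ne_top _ _) (min_ne_top _ _)
      (min_le_right _ _) (min_le_right _ _)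

end Line

theorem lintegral_fin_succ {n : ℕ} {f : (Fin (n + 1) → ℝ) → ℝ≥0∞} (hf : Measurable f) :
    ∫⁻ x, f x = ∫⁻ t : ℝ, ∫⁻ x : Fin n → ℝ, f (Fin.cons t x) := by
  have e := (volume_preserving_piFinSuccAbove (fun _ : Fin (n + 1) => ℝ) 0).symm
  rw [← e.lintegral_comp hf, Measure.volume_eq_prod, lintegral_prod]
  · refine lintegral_congr fun t => lintegral_congr fun x => congrArg f ?_
    exact Fin.insertNth_zero' t x
  · exact (hf.comp (MeasurableEquiv.measurable _)).aemeasurable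

theorem measurable_fin_cons {n : ℕ} :
    Measurable fun p : ℝ × (Fin n → ℝ) => (Fin.cons p.1 p.2 : Fin (n + 1) → ℝ) := by
  refine measurable_pi_iff.mpr (Fin.cases measurable_fst fun i => ?_)
  simp only [Fin.cons_succ]
  exact (measurable_pi_apply i).comp measurable_snd

theorem prekopa_leindler {n : ℕ} {f g h : (Fin n → ℝ) → ℝ≥0∞} (hf : Measurable f)
    (hg : Measurable g) (hh : Measurable h) {a b : ℝ} (ha : 0 < a) (hb : 0 < b) (hab : a + b = 1)
    (hfgh : ∀ x y, f x ^ a * g y ^ b ≤ h (a • x + b • y)) :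
    (∫⁻ x, f x) ^ a * (∫⁻ x, g x) ^ b ≤ ∫⁻ x, h x := by
  induction n with
  | zero =>
    have huniv : (volume : Measure (Fin 0 → ℝ)) univ = 1 := by
      simp [volume_pi, Measure.pi_of_empty _ (default : Fin 0 → ℝ)]
    simp only [lintegral_unique, huniv, mul_one]
    convert hfgh default default
  | succ n ih =>
    have hcons (t : ℝ) : Measurable fun x : Fin n → ℝ => (Fin.cons t x : Fin (n + 1) → ℝ) :=
      measurable_fin_cons.comp measurable_prodMk_left
    rw [lintegral_fin_succ hf, lintegral_fin_succ hg, lintegral_fin_succ hh]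
    refine prekopa_leindler_real (hf.comp measurable_fin_cons).lintegral_prod_right'
      (hg.comp measurable_fin_cons).lintegral_prod_right'
      (hh.comp measurable_fin_cons).lintegral_prod_right' ha hb hab fun s t => ?_
    refine ih (hf.comp (hcons s)) (hg.comp (hcons t)) (hh.comp (hcons _)) fun x y => ?_
    convert hfgh (Fin.cons s x) (Fin.cons t y) using 2
    ext i
    cases i using Fin.cases <;> simp

end PrekopaLeindler

section Gibbs

open ProbabilityTheory

theorem continuous_quadraticForm {E : Type*} [NormedAddCommGroup E] [NormedSpace ℝ E]
    [FiniteDimensional ℝ E] (Q : QuadraticForm ℝ E) : Continuous Q := by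
  have hB := (QuadraticMap.associated (R := ℝ) Q).toContinuousBilinearMap
    |>.isBoundedBilinearMap.continuous.comp (continuous_id.prodMk continuous_id)
  exact hB.congr fun x => QuadraticMap.associated_eq_self_apply ℝ Q x

theorem quadraticForm_parallelogram_law {E : Type*} [AddCommGroup E] [Module ℝ E]
    (Q : QuadraticForm ℝ E) (x y : E) :
    Q x + Q y = 2 * Q ((1 / 2 : ℝ) • x + (1 / 2 : ℝ) • y) + Q (x - y) / 2 := by
  have hadd : Q (x + y) = Q x + Q y + QuadraticMap.polar Q x y := QuadraticMap.map_add Q x y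
  have hsub : Q (x - y) = Q x + Q y - QuadraticMap.polar Q x y := by
    rw [sub_eq_add_neg, QuadraticMap.map_add Q, QuadraticMap.map_neg,
      QuadraticMap.polar_neg_right, ← sub_eq_add_neg]
  rw [← smul_add, QuadraticMap.map_smul, hadd, hsub, smul_eq_mul]
  ring

variable {n : ℕ} {S : Set (Fin n → ℝ)} {Q : QuadraticForm ℝ (Fin n → ℝ)}

theorem prekopa_leindler_setIntegral (hS : Convex ℝ S) (hSm : MeasurableSet S)
    {f g h : (Fin n → ℝ) → ℝ} (hf : Measurable f) (hg : Measurable g) (hh : Measurable h)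
    (hf₀ : 0 ≤ f) (hg₀ : 0 ≤ g) (hh₀ : 0 ≤ h) (hfS : IntegrableOn f S) (hgS : IntegrableOn g S)
    (hhS : IntegrableOn h S) {a b : ℝ} (ha : 0 < a) (hb : 0 < b) (hab : a + b = 1)
    (hfgh : ∀ x ∈ S, ∀ y ∈ S, f x ^ a * g y ^ b ≤ h (a • x + b • y)) :
    (∫ x in S, f x) ^ a * (∫ x in S, g x) ^ b ≤ ∫ x in S, h x := by
  have toLIntegral {u : (Fin n → ℝ) → ℝ} (hu₀ : 0 ≤ u) (huS : IntegrableOn u S) :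
      ENNReal.ofReal (∫ x in S, u x) = ∫⁻ x, S.indicator (fun x => ENNReal.ofReal (u x)) x := by
    rw [lintegral_indicator hSm, ofReal_integral_eq_lintegral_ofReal huS (.of_forall hu₀)]
  have hf_int : 0 ≤ ∫ x in S, f x := integral_nonneg hf₀
  have hg_int : 0 ≤ ∫ x in S, g x := integral_nonneg hg₀
  rw [← ENNReal.ofReal_le_ofReal_iff (integral_nonneg hh₀), ENNReal.ofReal_mul (by positivity),
    ← ENNReal.ofReal_rpow_of_nonneg hf_int ha.le, ← ENNReal.ofReal_rpow_of_nonneg hg_int hb.le,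
    toLIntegral hf₀ hfS, toLIntegral hg₀ hgS, toLIntegral hh₀ hhS]
  refine prekopa_leindler (hf.ennreal_ofReal.indicator hSm) (hg.ennreal_ofReal.indicator hSm)
    (hh.ennreal_ofReal.indicator hSm) ha hb hab fun x y => ?_
  by_cases hx : x ∈ S
  · by_cases hy : y ∈ S
    · rw [indicator_of_mem hx, indicator_of_mem hy, indicator_of_mem (hS hx hy ha.le hb.le hab),
        ENNReal.ofReal_rpow_of_nonneg (hf₀ x) ha.le, ENNReal.ofReal_rpow_of_nonneg (hg₀ y) hb.le,
        ← ENNReal.ofReal_mul (Real.rpow_nonneg (hf₀ x) a)]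
      exact ENNReal.ofReal_le_ofReal (hfgh x hx y hy)
    · simp [hy, hb]
  · simp [hx, ha]

/-- A compact convex set with nonempty interior that is symmetric about the origin: the domains to
which Gaussian weights are truncated. -/
structure IsSymmetricConvexBody (S : Set (Fin n → ℝ)) : Prop where
  convex : Convex ℝ S
  isCompact : IsCompact S
  interior_nonempty : (interior S).Nonempty
  neg_mem : ∀ x ∈ S, -x ∈ S

/-- The probability measure on `S` with density proportional to `exp (-Q)`, i.e. the Gaussian
measure of the quadratic form `Q` conditioned to lie in `S`. -/
noncomputable def gibbs (S : Set (Fin n → ℝ)) (Q : QuadraticForm ℝ (Fin n → ℝ)) :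
    Measure (Fin n → ℝ) :=
  (volume.restrict S).tilted fun x => -Q x

theorem integral_gibbs (S : Set (Fin n → ℝ)) (Q : QuadraticForm ℝ (Fin n → ℝ))
    (F : (Fin n → ℝ) → ℝ) :
    ∫ x, F x ∂gibbs S Q = (∫ x in S, F x * Real.exp (-Q x)) / ∫ x in S, Real.exp (-Q x) := by
  rw [gibbs, integral_tilted, ← integral_div]
  simp only [smul_eq_mul, mul_comm, mul_div_assoc]

theorem integrableOn_mul_exp_neg (hS : IsCompact S) {F : (Fin n → ℝ) → ℝ} (hF : Continuous F) :
    IntegrableOn (fun x => F x * Real.exp (-Q x)) S :=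
  (hF.mul (continuous_quadraticForm Q).neg.rexp).continuousOn.integrableOn_compact hS

theorem integrable_gibbs (hS : IsCompact S) {F : (Fin n → ℝ) → ℝ} (hF : Continuous F) :
    Integrable F (gibbs S Q) := by
  have hexp : IntegrableOn (fun x => Real.exp (-Q x)) S := by
    simpa using integrableOn_mul_exp_neg hS (Q := Q) continuous_one
  rw [gibbs, integrable_tilted_iff hexp]
  simpa only [smul_eq_mul, mul_comm, IntegrableOn] using integrableOn_mul_exp_neg hS hF

theorem ae_gibbs_mem (hS : MeasurableSet S) : ∀ᵐ x ∂gibbs S Q, x ∈ S :=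
  (tilted_absolutelyContinuous _ _).ae_le (ae_restrict_mem hS)

namespace IsSymmetricConvexBody

theorem neg_preimage (hS : IsSymmetricConvexBody S) : Neg.neg ⁻¹' S = S :=
  Subset.antisymm (fun x hx => neg_neg x ▸ hS.neg_mem _ hx) fun x hx => hS.neg_mem x hx

theorem isProbabilityMeasure_gibbs (hS : IsSymmetricConvexBody S) :
    IsProbabilityMeasure (gibbs S Q) := by
  have hvol : volume S ≠ 0 := (Measure.measure_pos_of_nonempty_interior _ hS.interior_nonempty).ne'
  have : NeZero (volume.restrict S) := ⟨Measure.restrict_eq_zero.not.mpr hvol⟩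
  refine isProbabilityMeasure_tilted ?_
  simpa [IntegrableOn] using integrableOn_mul_exp_neg hS.isCompact (Q := Q) continuous_one

theorem integral_comp_neg_gibbs (hS : IsSymmetricConvexBody S) (F : (Fin n → ℝ) → ℝ) :
    ∫ x, F (-x) ∂gibbs S Q = ∫ x, F x ∂gibbs S Q := by
  have h := (Measure.measurePreserving_neg volume).setIntegral_preimage_emb
    (MeasurableEquiv.neg (Fin n → ℝ)).measurableEmbedding (fun x => F x * Real.exp (-Q x)) S
  simp only [QuadraticMap.map_neg, hS.neg_preimage] at h
  rw [integral_gibbs, integral_gibbs, h]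

theorem integral_exp_mul_integral_exp_le_one (hS : IsSymmetricConvexBody S)
    {φ ψ : (Fin n → ℝ) → ℝ} (hφ : Continuous φ) (hψ : Continuous ψ)
    (h : ∀ x ∈ S, ∀ y ∈ S, φ x + ψ y ≤ Q (x - y) / 2) :
    (∫ x, Real.exp (φ x) ∂gibbs S Q) * ∫ x, Real.exp (ψ x) ∂gibbs S Q ≤ 1 := by
  have hQ := continuous_quadraticForm Q
  have integrable {u : (Fin n → ℝ) → ℝ} (hu : Continuous u) :=
    hu.rexp.continuousOn.integrableOn_compact hS.isCompact (μ := volume)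
  -- The parallelogram law for `Q` leaves room for `Q (x - y) / 2` at the midpoint.
  have pl := prekopa_leindler_setIntegral hS.convex hS.isCompact.measurableSet
    (hφ.fun_sub hQ).rexp.measurable (hψ.fun_sub hQ).rexp.measurable hQ.fun_neg.rexp.measurable
    (fun _ => (Real.exp_pos _).le) (fun _ => (Real.exp_pos _).le) (fun _ => (Real.exp_pos _).le)
    (integrable (hφ.fun_sub hQ)) (integrable (hψ.fun_sub hQ)) (integrable hQ.fun_neg) one_half_pos
    one_half_pos (add_halves (1 : ℝ)) fun x hx y hy => by
      rw [← Real.exp_mul, ← Real.exp_mul, ← Real.exp_add, Real.exp_le_exp]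
      linarith [h x hx y hy, quadraticForm_parallelogram_law Q x y]
  have hφ_int : 0 ≤ ∫ x in S, Real.exp (φ x - Q x) := integral_nonneg fun _ => (Real.exp_pos _).le
  have hψ_int : 0 ≤ ∫ x in S, Real.exp (ψ x - Q x) := integral_nonneg fun _ => (Real.exp_pos _).le
  rw [← Real.sqrt_eq_rpow, ← Real.sqrt_eq_rpow, ← Real.sqrt_mul hφ_int] at pl
  simp only [integral_gibbs, ← Real.exp_add, ← sub_eq_add_neg]
  rw [Real.sqrt_le_left (integral_nonneg fun _ => (Real.exp_pos _).le), sq] at pl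
  rw [div_mul_div_comm]
  exact div_le_one_of_le₀ pl (mul_self_nonneg _)

theorem hasSubgaussianMGF_gibbs (hS : IsSymmetricConvexBody S) (ℓ : (Fin n → ℝ) →ₗ[ℝ] ℝ)
    {c : ℝ≥0} (hc : 0 < c) (hℓ : ∀ z, ℓ z ^ 2 ≤ 2 * c * Q z) :
    HasSubgaussianMGF ℓ c (gibbs S Q) where
  integrable_exp_mul t := integrable_gibbs hS.isCompact
    (ℓ.continuous_of_finiteDimensional.const_mul t).rexp
  mgf_le t := by
    have hℓc : Continuous ℓ := ℓ.continuous_of_finiteDimensional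
    have young (z : Fin n → ℝ) : t * ℓ z ≤ c * t ^ 2 + Q z / 2 := by
      refine le_of_mul_le_mul_left ?_ (show (0 : ℝ) < 4 * c from mul_pos four_pos hc)
      linarith [sq_nonneg (2 * c * t - ℓ z), hℓ z]
    have transport := hS.integral_exp_mul_integral_exp_le_one (Q := Q)
      (φ := fun x => t * ℓ x - c * t ^ 2) (ψ := fun x => t * ℓ (-x)) (by fun_prop) (by fun_prop)
      fun x _ y _ => by
        rw [sub_add_eq_add_sub, sub_le_iff_le_add', ← mul_add, ← map_add, ← sub_eq_add_neg]
        exact young (x - y)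
    rw [hS.integral_comp_neg_gibbs fun x => Real.exp (t * ℓ x)] at transport
    simp only [Real.exp_sub, integral_div] at transport
    refine abs_le_of_sq_le_sq' ?_ (Real.exp_pos _).le |>.2
    rw [← Real.exp_nat_mul, Nat.cast_ofNat, mul_div_cancel₀ _ two_ne_zero]
    rwa [div_mul_eq_mul_div, div_le_one (Real.exp_pos _), ← sq] at transport

end IsSymmetricConvexBody

open Nat in
theorem integral_abs_pow_le_of_hasSubgaussianMGF {Ω : Type*} [MeasurableSpace Ω] {μ : Measure Ω}
    {X : Ω → ℝ} {c : ℝ≥0} (hX : HasSubgaussianMGF X c μ) {t : ℝ} (ht : 0 < t) (k : ℕ) :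
    ∫ ω, |X ω| ^ k ∂μ ≤ 2 * k ! * Real.exp (c * t ^ 2 / 2) / t ^ k := by
  have pow_le (ω : Ω) :
      |X ω| ^ k ≤ k ! / t ^ k * (Real.exp (t * X ω) + Real.exp (-t * X ω)) := by
    have h := Real.pow_div_factorial_le_exp |t * X ω| (abs_nonneg _) k
    rw [abs_mul, abs_of_pos ht, mul_pow] at h
    have hexp : Real.exp (t * |X ω|) ≤ Real.exp (t * X ω) + Real.exp (-t * X ω) := by
      simpa [abs_mul, abs_of_pos ht] using Real.exp_abs_le (t * X ω)
    calc |X ω| ^ k = k ! / t ^ k * (t ^ k * |X ω| ^ k / k !) := by field_simp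
      _ ≤ k ! / t ^ k * (Real.exp (t * X ω) + Real.exp (-t * X ω)) := by
        gcongr
        exact h.trans hexp
  calc ∫ ω, |X ω| ^ k ∂μ
      ≤ ∫ ω, k ! / t ^ k * (Real.exp (t * X ω) + Real.exp (-t * X ω)) ∂μ :=
        integral_mono_of_nonneg (.of_forall fun _ => by positivity)
          (((hX.integrable_exp_mul t).add (hX.integrable_exp_mul (-t))).const_mul _)
          (.of_forall pow_le)
    _ = k ! / t ^ k * (mgf X μ t + mgf X μ (-t)) := by
        rw [integral_const_mul, integral_add (hX.integrable_exp_mul t)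
          (hX.integrable_exp_mul (-t))]
        rfl
    _ ≤ k ! / t ^ k * (Real.exp (c * t ^ 2 / 2) + Real.exp (c * (-t) ^ 2 / 2)) := by
        gcongr <;> exact hX.mgf_le _
    _ = 2 * k ! * Real.exp (c * t ^ 2 / 2) / t ^ k := by rw [neg_sq]; ring

theorem one_add_integral_le_integral_exp {Ω : Type*} [MeasurableSpace Ω] {μ : Measure Ω}
    [IsProbabilityMeasure μ] {F : Ω → ℝ} (hF : Integrable F μ)
    (hF' : Integrable (fun ω => Real.exp (F ω)) μ) :
    1 + ∫ ω, F ω ∂μ ≤ ∫ ω, Real.exp (F ω) ∂μ := by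
  have h := integral_mono ((integrable_const 1).add hF) hF' fun ω => by
    simpa [add_comm] using Real.add_one_le_exp (F ω)
  simpa [integral_add (integrable_const 1) hF] using h

namespace IsSymmetricConvexBody

variable {G R : (Fin n → ℝ) → ℝ}

theorem abs_integral_gibbs_le_of_abs_add_neg_le (hS : IsSymmetricConvexBody S) (hG : Continuous G)
    (hR : Continuous R) (h : ∀ x ∈ S, |G x + G (-x)| ≤ 2 * R x) :
    |∫ x, G x ∂gibbs S Q| ≤ ∫ x, R x ∂gibbs S Q := by
  have integrable {F : (Fin n → ℝ) → ℝ} (hF : Continuous F) : Integrable F (gibbs S Q) :=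
    integrable_gibbs hS.isCompact hF
  have hsymm : 2 * ∫ x, G x ∂gibbs S Q = ∫ x, (G x + G (-x)) ∂gibbs S Q := by
    rw [integral_add (integrable hG) (integrable (by fun_prop)),
      hS.integral_comp_neg_gibbs, two_mul]
  have h2 : |2 * ∫ x, G x ∂gibbs S Q| ≤ 2 * ∫ x, R x ∂gibbs S Q := by
    rw [hsymm, ← integral_const_mul]
    refine abs_integral_le_integral_abs.trans (integral_mono_ae (integrable ?_) (integrable ?_) ?_)
    · fun_prop
    · fun_prop
    · filter_upwards [ae_gibbs_mem hS.isCompact.measurableSet] with x hx using h x hx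
  rwa [abs_mul, abs_two, mul_le_mul_iff_right₀ two_pos] at h2

theorem one_sub_le_integral_exp_neg (hS : IsSymmetricConvexBody S) (hG : Continuous G)
    (hR : Continuous R) (h : ∀ x ∈ S, |G x + G (-x)| ≤ 2 * R x) :
    1 - ∫ x, R x ∂gibbs S Q ≤ ∫ x, Real.exp (-G x) ∂gibbs S Q := by
  have := hS.isProbabilityMeasure_gibbs (Q := Q)
  have hG_le := (abs_le.mp (hS.abs_integral_gibbs_le_of_abs_add_neg_le (Q := Q) hG hR h)).2
  have hexp := one_add_integral_le_integral_exp (integrable_gibbs hS.isCompact (Q := Q) hG.fun_neg)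
    (integrable_gibbs hS.isCompact hG.fun_neg.rexp)
  rw [integral_neg] at hexp
  linarith

theorem one_sub_two_mul_mul_integral_exp_neg_le (hS : IsSymmetricConvexBody S)
    (hG : Continuous G) (hR : Continuous R) (h : ∀ x ∈ S, |G x + G (-x)| ≤ 2 * R x)
    (hGR : ∀ x ∈ S, ∀ y ∈ S, G x - R x - G y ≤ Q (x - y) / 2) :
    (1 - 2 * ∫ x, R x ∂gibbs S Q) * ∫ x, Real.exp (-G x) ∂gibbs S Q ≤ 1 := by
  have := hS.isProbabilityMeasure_gibbs (Q := Q)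
  have hG_ge := (abs_le.mp (hS.abs_integral_gibbs_le_of_abs_add_neg_le (Q := Q) hG hR h)).1
  have hexp := one_add_integral_le_integral_exp
    (integrable_gibbs hS.isCompact (Q := Q) (hG.fun_sub hR))
    (integrable_gibbs hS.isCompact (hG.fun_sub hR).rexp)
  rw [integral_sub (integrable_gibbs hS.isCompact hG) (integrable_gibbs hS.isCompact hR)] at hexp
  calc (1 - 2 * ∫ x, R x ∂gibbs S Q) * ∫ x, Real.exp (-G x) ∂gibbs S Q
      ≤ (∫ x, Real.exp (G x - R x) ∂gibbs S Q) * ∫ x, Real.exp (-G x) ∂gibbs S Q := by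
        refine mul_le_mul_of_nonneg_right ?_ (integral_nonneg fun _ => (Real.exp_pos _).le)
        linarith
    _ ≤ 1 := hS.integral_exp_mul_integral_exp_le_one (hG.fun_sub hR) hG.fun_neg hGR

end IsSymmetricConvexBody

end Gibbs

section Chain

open ProbabilityTheory

theorem abs_sq_sub_sq_le {L : ℝ} (hL : 0 < L) (u v : ℝ) :
    |u ^ 2 - v ^ 2| ≤ L / 2 * (v - u) ^ 2 + 1 / L * (u ^ 2 + v ^ 2) := by
  refine le_of_mul_le_mul_left ?_ (mul_pos two_pos hL)
  calc 2 * L * |u ^ 2 - v ^ 2| = 2 * (L * |v - u|) * |u + v| := by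
        rw [sq_sub_sq, abs_mul, abs_sub_comm u v]
        ring
    _ ≤ (L * |v - u|) ^ 2 + |u + v| ^ 2 := two_mul_le_add_sq _ _
    _ ≤ (L * |v - u|) ^ 2 + 2 * (u ^ 2 + v ^ 2) := by
        rw [sq_abs (u + v)]
        gcongr
        exact add_sq_le
    _ = 2 * L * (L / 2 * (v - u) ^ 2 + 1 / L * (u ^ 2 + v ^ 2)) := by
        rw [mul_pow, sq_abs]
        field_simp

theorem sum_abs_sq_sub_sq_le (z : ℕ → ℝ) (N : ℕ) {L : ℝ} (hL : 0 < L) :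
    ∑ k ∈ Finset.range N, |z k ^ 2 - z (k + 1) ^ 2| ≤
      2 / L * ∑ k ∈ Finset.range (N + 1), z k ^ 2 +
        L / 2 * ∑ k ∈ Finset.range N, (z (k + 1) - z k) ^ 2 := by
  set S := ∑ k ∈ Finset.range (N + 1), z k ^ 2
  have hhead : ∑ k ∈ Finset.range N, z k ^ 2 ≤ S := by
    simp only [S, Finset.sum_range_succ, le_add_iff_nonneg_right, sq_nonneg]
  have htail : ∑ k ∈ Finset.range N, z (k + 1) ^ 2 ≤ S := by
    simp only [S, Finset.sum_range_succ', le_add_iff_nonneg_right, sq_nonneg]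
  calc ∑ k ∈ Finset.range N, |z k ^ 2 - z (k + 1) ^ 2|
      ≤ ∑ k ∈ Finset.range N,
          (L / 2 * (z (k + 1) - z k) ^ 2 + 1 / L * (z k ^ 2 + z (k + 1) ^ 2)) :=
        Finset.sum_le_sum fun k _ => abs_sq_sub_sq_le hL _ _
    _ = 1 / L * (∑ k ∈ Finset.range N, z k ^ 2 + ∑ k ∈ Finset.range N, z (k + 1) ^ 2) +
          L / 2 * ∑ k ∈ Finset.range N, (z (k + 1) - z k) ^ 2 := by
        rw [Finset.sum_add_distrib, ← Finset.mul_sum, ← Finset.mul_sum, Finset.sum_add_distrib,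
          add_comm]
    _ ≤ 1 / L * (S + S) + L / 2 * ∑ k ∈ Finset.range N, (z (k + 1) - z k) ^ 2 := by gcongr
    _ = 2 / L * S + L / 2 * ∑ k ∈ Finset.range N, (z (k + 1) - z k) ^ 2 := by ring

theorem sq_le_sum_sq_add_sum_sq_sub (z : ℕ → ℝ) {N j : ℕ} (hj : j ≤ N) {L : ℝ} (hL : 0 < L) :
    z j ^ 2 ≤ (1 / (N + 1) + 2 / L) * ∑ k ∈ Finset.range (N + 1), z k ^ 2 +
      L / 2 * ∑ k ∈ Finset.range N, (z (k + 1) - z k) ^ 2 := by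
  set S := ∑ k ∈ Finset.range (N + 1), z k ^ 2 with hS
  set V := 2 / L * S + L / 2 * ∑ k ∈ Finset.range N, (z (k + 1) - z k) ^ 2 with hV
  have hdist {p q : ℕ} (hpq : p ≤ q) (hq : q ≤ N) : |z p ^ 2 - z q ^ 2| ≤ V := by
    refine (dist_le_Ico_sum_dist (fun k => z k ^ 2) hpq).trans
      (le_trans ?_ (sum_abs_sq_sub_sq_le z N hL))
    refine Finset.sum_le_sum_of_subset_of_nonneg (fun k hk => ?_) fun _ _ _ => abs_nonneg _
    exact Finset.mem_range.mpr ((Finset.mem_Ico.mp hk).2.trans_le hq)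
  have hdiff (i : ℕ) (hi : i ≤ N) : z j ^ 2 ≤ z i ^ 2 + V := by
    rcases le_total i j with h | h
    · linarith [neg_abs_le (z i ^ 2 - z j ^ 2), hdist h hj]
    · linarith [le_abs_self (z j ^ 2 - z i ^ 2), hdist h hi]
  have havg : (N + 1) * z j ^ 2 ≤ S + (N + 1) * V := by
    have h := Finset.sum_le_sum fun i hi => hdiff i (Finset.mem_range_succ_iff.mp hi)
    simpa only [Finset.sum_add_distrib, Finset.sum_const, Finset.card_range, nsmul_eq_mul,
      Nat.cast_add_one, ← hS] using h
  refine le_of_mul_le_mul_left (havg.trans_eq ?_) (show (0 : ℝ) < N + 1 by positivity)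
  rw [hV]
  field_simp
  ring

variable {m : ℕ} {W α : ℝ}

/-- The `j`-th coordinate of `pad m x` as a linear functional of `x`. -/
noncomputable def padLinear (m j : ℕ) : (Fin m → ℝ) →ₗ[ℝ] ℝ where
  toFun x := pad m x j
  map_add' x y := by unfold pad; split_ifs <;> simp
  map_smul' a x := by unfold pad; split_ifs <;> simp

/-- The quadratic form in the exponent of the weight `muR m W α`. -/
noncomputable def energy (m : ℕ) (W α : ℝ) : QuadraticForm ℝ (Fin m → ℝ) :=
  (1 / 2 : ℝ) • ∑ j ∈ Finset.Ico 1 m,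
      QuadraticMap.sq.comp (padLinear m j - padLinear m (j - 1)) +
    (α / W ^ 2) • ∑ j ∈ Finset.range m, QuadraticMap.sq.comp (padLinear m j)

theorem energy_apply (x : Fin m → ℝ) :
    energy m W α x = 1 / 2 * ∑ j ∈ Finset.Ico 1 m, (pad m x j - pad m x (j - 1)) ^ 2 +
      α / W ^ 2 * ∑ j ∈ Finset.range m, pad m x j ^ 2 := by
  simp [energy, padLinear, ← sq]

theorem muR_eq_exp_neg_energy (x : Fin m → ℝ) : muR m W α x = Real.exp (-energy m W α x) := by
  rw [muR, energy_apply]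
  congr 1
  ring

theorem pad_coe (x : Fin m → ℝ) (j : Fin m) : pad m x j = x j := by
  simp [pad]

theorem sum_sq_le_energy (x : Fin m → ℝ) : α / W ^ 2 * ∑ j, x j ^ 2 ≤ energy m W α x := by
  rw [energy_apply, Finset.sum_range]
  simp only [pad_coe, le_add_iff_nonneg_left]
  positivity

theorem coord_sq_le_energy (hα : 0 < α) {L : ℝ} (hL : 0 < L) (hLW : L ≤ W) (hLm : L ≤ m)
    (x : Fin m → ℝ) (j : Fin m) :
    (x j / W) ^ 2 ≤ (1 + 3 / α) / L * energy m W α x := by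
  obtain ⟨N, rfl⟩ : ∃ N, m = N + 1 := Nat.exists_eq_succ_of_ne_zero (Fin.pos j).ne'
  have hW : 0 < W := hL.trans_le hLW
  have h := sq_le_sum_sq_add_sum_sq_sub (pad (N + 1) x) (Fin.is_le j) hL
  rw [pad_coe] at h
  rw [energy_apply, Finset.sum_Ico_eq_sum_range]
  simp only [add_tsub_cancel_right, add_comm 1]
  set S := ∑ k ∈ Finset.range (N + 1), pad (N + 1) x k ^ 2
  set D := ∑ k ∈ Finset.range N, (pad (N + 1) x (k + 1) - pad (N + 1) x k) ^ 2
  have : 0 ≤ S := Finset.sum_nonneg fun _ _ => sq_nonneg _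
  have : 0 ≤ D := Finset.sum_nonneg fun _ _ => sq_nonneg _
  calc (x j / W) ^ 2 = x j ^ 2 / W ^ 2 := div_pow _ _ _
    _ ≤ ((1 / (N + 1) + 2 / L) * S + L / 2 * D) / W ^ 2 := by gcongr
    _ ≤ ((1 / L + 2 / L) * S + L / 2 * D) / W ^ 2 := by
        gcongr
        exact_mod_cast hLm
    _ = 3 * S / (L * W ^ 2) + L ^ 2 / W ^ 2 * (D / (2 * L)) := by
        field_simp
        ring
    _ ≤ 3 * S / (L * W ^ 2) + 1 * (D / (2 * L)) := by
        gcongr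
        exact div_le_one_of_le₀ (by gcongr) (sq_nonneg W)
    _ ≤ 3 * S / (L * W ^ 2) + 1 * (D / (2 * L)) +
          (α * S / (L * W ^ 2) + 3 * D / (2 * α * L)) := le_add_of_nonneg_right (by positivity)
    _ = (1 + 3 / α) / L * (1 / 2 * D + α / W ^ 2 * S) := by
        field_simp
        ring

theorem isSymmetricConvexBody_box {r : ℝ} (hr : 0 < r) : IsSymmetricConvexBody (box m r) := by
  have hbox : box m r = Metric.closedBall 0 r := by
    ext x
    simp only [box, mem_ofPred_eq, mem_closedBall_zero_iff, pi_norm_le_iff_of_nonneg hr.le,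
      Real.norm_eq_abs]
  rw [hbox]
  refine ⟨convex_closedBall 0 r, isCompact_closedBall 0 r, ?_, fun x hx => by simpa using hx⟩
  exact ⟨0, Metric.ball_subset_interior_closedBall (Metric.mem_ball_self hr)⟩

theorem integral_gibbs_box (r : ℝ) (F : (Fin m → ℝ) → ℝ) :
    ∫ x, F x ∂gibbs (box m r) (energy m W α) =
      (∫ x in box m r, F x * muR m W α x) / ∫ x in box m r, muR m W α x := by
  simp only [integral_gibbs, muR_eq_exp_neg_energy]

theorem integral_coord_pow_four_le (hα : 0 < α) {L : ℝ} (hL : 0 < L) (hLW : L ≤ W) (hLm : L ≤ m)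
    {r : ℝ} (hr : 0 < r) (j : Fin m) :
    ∫ x, (x j / W) ^ 4 ∂gibbs (box m r) (energy m W α) ≤
      48 * Real.exp ((1 + 3 / α) / 4) / L ^ 2 := by
  obtain ⟨c, hc⟩ : ∃ c : ℝ≥0, (c : ℝ) = (1 + 3 / α) / (2 * L) := ⟨⟨_, by positivity⟩, rfl⟩
  have hc₀ : 0 < c := by
    rw [← NNReal.coe_pos, hc]
    positivity
  have hsub : HasSubgaussianMGF (W⁻¹ • LinearMap.proj j : (Fin m → ℝ) →ₗ[ℝ] ℝ) c
      (gibbs (box m r) (energy m W α)) :=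
    (isSymmetricConvexBody_box hr).hasSubgaussianMGF_gibbs _ hc₀ fun x => by
      calc (W⁻¹ * x j) ^ 2 = (x j / W) ^ 2 := by rw [inv_mul_eq_div]
        _ ≤ (1 + 3 / α) / L * energy m W α x := coord_sq_le_energy hα hL hLW hLm x j
        _ = 2 * c * energy m W α x := by
            rw [hc]
            field_simp
  calc ∫ x, (x j / W) ^ 4 ∂gibbs (box m r) (energy m W α)
      = ∫ x, |(W⁻¹ • LinearMap.proj j : (Fin m → ℝ) →ₗ[ℝ] ℝ) x| ^ 4
          ∂gibbs (box m r) (energy m W α) := by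
        simp only [LinearMap.smul_apply, LinearMap.proj_apply, smul_eq_mul,
          Even.pow_abs (show Even 4 by decide), div_eq_inv_mul]
    _ ≤ 2 * (Nat.factorial 4 : ℕ) * Real.exp (c * √L ^ 2 / 2) / √L ^ 4 :=
        integral_abs_pow_le_of_hasSubgaussianMGF hsub (Real.sqrt_pos.mpr hL) 4
    _ = 48 * Real.exp ((1 + 3 / α) / 4) / L ^ 2 := by
        have hexp : c * √L ^ 2 / 2 = (1 + 3 / α) / 4 := by
          rw [hc, Real.sq_sqrt hL.le]
          field_simp
          norm_num
        rw [hexp, show √L ^ 4 = (√L ^ 2) ^ 2 by ring, Real.sq_sqrt hL.le]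
        norm_num [Nat.factorial]

theorem integral_sum_coord_pow_four_le (hα : 0 < α) {L : ℝ} (hL : 0 < L) (hLW : L ≤ W)
    (hLm : L ≤ m) {r : ℝ} (hr : 0 < r) :
    ∫ x, ∑ j, (x j / W) ^ 4 ∂gibbs (box m r) (energy m W α) ≤
      48 * Real.exp ((1 + 3 / α) / 4) * (m / L ^ 2) := by
  rw [integral_finsetSum _ fun j _ =>
    integrable_gibbs (isSymmetricConvexBody_box hr).isCompact (by fun_prop)]
  refine (Finset.sum_le_sum fun j _ =>
    integral_coord_pow_four_le hα hL hLW hLm hr j).trans_eq ?_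
  rw [Finset.sum_const, Finset.card_univ, Fintype.card_fin, nsmul_eq_mul]
  ring

end Chain

section LocalBounds

open Asymptotics

theorem exists_abs_sub_le_max_sq_mul_abs_sub {g : ℝ → ℝ} (hg : Differentiable ℝ g)
    (hg' : deriv g =O[𝓝 0] fun s => s ^ 2) :
    ∃ D > 0, ∃ ρ > 0, ∀ s t, |s| ≤ ρ → |t| ≤ ρ → |g s - g t| ≤ D * max |s| |t| ^ 2 * |s - t| := by
  obtain ⟨D, hD, hbound⟩ := hg'.exists_pos
  obtain ⟨ρ, hρ, hball⟩ := Metric.nhds_basis_closedBall.eventually_iff.mp hbound.bound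
  refine ⟨D, hD, ρ, hρ, fun s t hs ht => ?_⟩
  set M := max |s| |t|
  refine (convex_closedBall (0 : ℝ) M).norm_image_sub_le_of_norm_deriv_le
    (fun x _ => hg x) (fun x hx => ?_) ?_ ?_
  · rw [mem_closedBall_zero_iff, Real.norm_eq_abs] at hx
    calc ‖deriv g x‖ ≤ D * ‖x ^ 2‖ :=
          hball (mem_closedBall_zero_iff.mpr (hx.trans (max_le hs ht)))
      _ ≤ D * M ^ 2 := by
          rw [norm_pow, Real.norm_eq_abs]
          gcongr
  · exact mem_closedBall_zero_iff.mpr (le_max_right _ _)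
  · exact mem_closedBall_zero_iff.mpr (le_max_left _ _)

theorem mul_max_sq_mul_abs_sub_le {D ε s t : ℝ} (hD : 0 ≤ D) (hε : 0 < ε)
    (h : 4 * D * |s - t| ≤ ε) :
    D * max |s| |t| ^ 2 * |s - t| ≤ 9 * D ^ 2 / (2 * ε) * s ^ 4 + ε * (s - t) ^ 2 := by
  have hmax : max |s| |t| ^ 2 ≤ 3 * s ^ 2 + 2 * (s - t) ^ 2 := by
    rcases max_choice |s| |t| with h | h <;> rw [h, sq_abs]
    · linarith [sq_nonneg s, sq_nonneg (s - t)]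
    · linarith [sq_nonneg s, sq_nonneg (2 * s - t)]
  rw [← sq_abs (s - t)] at hmax ⊢
  set u := |s - t|
  have hquartic : 3 * D * s ^ 2 * u ≤ 9 * D ^ 2 / (2 * ε) * s ^ 4 + ε / 2 * u ^ 2 := by
    have hsq : 9 * D ^ 2 / (2 * ε) * s ^ 4 + ε / 2 * u ^ 2 - 3 * D * s ^ 2 * u =
        (3 * D * s ^ 2 - ε * u) ^ 2 / (2 * ε) := by
      field_simp
      ring
    exact sub_nonneg.mp (hsq ▸ by positivity)
  have hcubic : 2 * D * u * u ^ 2 ≤ ε / 2 * u ^ 2 := by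
    gcongr
    linarith
  calc D * max |s| |t| ^ 2 * u ≤ D * (3 * s ^ 2 + 2 * u ^ 2) * u := by gcongr
    _ = 3 * D * s ^ 2 * u + 2 * D * u * u ^ 2 := by ring
    _ ≤ 9 * D ^ 2 / (2 * ε) * s ^ 4 + ε * u ^ 2 := by linarith

theorem exists_quartic_bounds {g : ℝ → ℝ} (hg : Differentiable ℝ g)
    (hg' : deriv g =O[𝓝 0] fun s => s ^ 2)
    (heven : (fun s => g s + g (-s)) =O[𝓝 0] fun s => s ^ 4) {ε : ℝ} (hε : 0 < ε) :
    ∃ C ≥ 0, ∃ ρ > 0, (∀ s, |s| ≤ ρ → |g s + g (-s)| ≤ 2 * (C * s ^ 4)) ∧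
      ∀ s t, |s| ≤ ρ → |t| ≤ ρ → g s - C * s ^ 4 - g t ≤ ε * (s - t) ^ 2 := by
  obtain ⟨D, hD, ρ₁, hρ₁, hlip⟩ := exists_abs_sub_le_max_sq_mul_abs_sub hg hg'
  obtain ⟨E, hE, hbound⟩ := heven.exists_pos
  obtain ⟨ρ₂, hρ₂, hball⟩ := Metric.nhds_basis_closedBall.eventually_iff.mp hbound.bound
  set K := 9 * D ^ 2 / (2 * ε)
  have hK : 0 ≤ K := by positivity
  refine ⟨E / 2 + K, by positivity, min (ε / (8 * D)) (min ρ₁ ρ₂), by positivity,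
    fun s hs => ?_, fun s t hs ht => ?_⟩
  · have hs₂ : s ∈ Metric.closedBall (0 : ℝ) ρ₂ :=
      mem_closedBall_zero_iff.mpr (hs.trans ((min_le_right _ _).trans (min_le_right _ _)))
    calc |g s + g (-s)| ≤ E * ‖s ^ 4‖ := hball hs₂
      _ = 2 * (E / 2 * s ^ 4) := by
          rw [norm_pow, Real.norm_eq_abs, Even.pow_abs (show Even 4 by decide)]
          ring
      _ ≤ 2 * ((E / 2 + K) * s ^ 4) := by
          gcongr
          exact le_add_of_nonneg_right hK
  · obtain ⟨hs₀, hs₁⟩ := le_min_iff.mp hs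
    obtain ⟨ht₀, ht₁⟩ := le_min_iff.mp ht
    have hclose : 4 * D * |s - t| ≤ ε := by
      calc 4 * D * |s - t| ≤ 4 * D * (ε / (8 * D) + ε / (8 * D)) := by
            gcongr
            exact (abs_sub s t).trans (add_le_add hs₀ ht₀)
        _ = ε := by
            field_simp
            norm_num
    have hdiff : g s - g t ≤ K * s ^ 4 + ε * (s - t) ^ 2 :=
      ((le_abs_self _).trans
        (hlip s t (hs₁.trans (min_le_left _ _)) (ht₁.trans (min_le_left _ _)))).trans
        (mul_max_sq_mul_abs_sub_le hD.le hε hclose)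
    have : 0 ≤ E / 2 * s ^ 4 := by positivity
    linarith

variable (q : ℕ) (c : ℕ → ℝ)

theorem pow_isBigO_pow_nhds_zero {m n : ℕ} (h : m ≤ n) :
    (fun s : ℝ => s ^ n) =O[𝓝 0] fun s => s ^ m := by
  obtain rfl | h := h.eq_or_lt
  · exact isBigO_refl _ _
  · exact (isLittleO_pow_pow h).isBigO

theorem deriv_sum_Icc_three_isBigO :
    deriv (fun s : ℝ => ∑ i ∈ Finset.Icc 3 q, c i * s ^ i) =O[𝓝 0] fun s => s ^ 2 := by
  have hderiv : deriv (fun s : ℝ => ∑ i ∈ Finset.Icc 3 q, c i * s ^ i) =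
      fun s => ∑ i ∈ Finset.Icc 3 q, c i * (i * s ^ (i - 1)) := by
    ext s
    exact (HasDerivAt.fun_sum fun i _ => (hasDerivAt_pow i s).const_mul (c i)).deriv
  rw [hderiv]
  refine IsBigO.fun_sum fun i hi => ?_
  have hi' : 2 ≤ i - 1 := by have := (Finset.mem_Icc.mp hi).1; omega
  exact ((pow_isBigO_pow_nhds_zero hi').const_mul_left (i : ℝ)).const_mul_left (c i)

theorem sum_Icc_three_add_comp_neg_isBigO :
    (fun s : ℝ => (∑ i ∈ Finset.Icc 3 q, c i * s ^ i) + ∑ i ∈ Finset.Icc 3 q, c i * (-s) ^ i)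
      =O[𝓝 0] fun s => s ^ 4 := by
  simp only [← Finset.sum_add_distrib, ← mul_add]
  refine IsBigO.fun_sum fun i hi => .const_mul_left (f := fun s => s ^ i + (-s) ^ i) ?_ (c i)
  rcases i.even_or_odd with heven | hodd
  · have hi' : 4 ≤ i := by
      have := (Finset.mem_Icc.mp hi).1
      obtain ⟨k, rfl⟩ := heven
      omega
    simp only [heven.neg_pow]
    exact (pow_isBigO_pow_nhds_zero hi').add (pow_isBigO_pow_nhds_zero hi')
  · simp only [hodd.neg_pow, add_neg_cancel]
    exact isBigO_zero _ _

end LocalBounds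

section Limit

variable {g : ℝ → ℝ} {C ρ α L W δ : ℝ} {m : ℕ}

theorem abs_div_le_of_mem_box (hW : 0 < W) (hδρ : δ ≤ ρ) {x : Fin m → ℝ}
    (hx : x ∈ box m (δ * W)) (j : Fin m) : |x j / W| ≤ ρ := by
  rw [abs_div, abs_of_pos hW, div_le_iff₀ hW]
  exact (hx j).trans (by gcongr)

theorem abs_sum_add_sum_neg_le (heven : ∀ s, |s| ≤ ρ → |g s + g (-s)| ≤ 2 * (C * s ^ 4))
    (hW : 0 < W) (hδρ : δ ≤ ρ) {x : Fin m → ℝ} (hx : x ∈ box m (δ * W)) :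
    |∑ j, g (x j / W) + ∑ j, g ((-x) j / W)| ≤ 2 * (C * ∑ j, (x j / W) ^ 4) := by
  rw [← Finset.sum_add_distrib, Finset.mul_sum, Finset.mul_sum]
  refine (Finset.abs_sum_le_sum_abs _ _).trans (Finset.sum_le_sum fun j _ => ?_)
  rw [Pi.neg_apply, neg_div]
  exact heven _ (abs_div_le_of_mem_box hW hδρ hx j)

theorem sum_sub_sum_le_half_energy_sub
    (hdiff : ∀ s t, |s| ≤ ρ → |t| ≤ ρ → g s - C * s ^ 4 - g t ≤ α / 2 * (s - t) ^ 2)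
    (hW : 0 < W) (hδρ : δ ≤ ρ) {x y : Fin m → ℝ} (hx : x ∈ box m (δ * W))
    (hy : y ∈ box m (δ * W)) :
    ∑ j, g (x j / W) - C * ∑ j, (x j / W) ^ 4 - ∑ j, g (y j / W) ≤
      energy m W α (x - y) / 2 := by
  calc ∑ j, g (x j / W) - C * ∑ j, (x j / W) ^ 4 - ∑ j, g (y j / W)
      = ∑ j, (g (x j / W) - C * (x j / W) ^ 4 - g (y j / W)) := by
        rw [Finset.mul_sum, Finset.sum_sub_distrib, Finset.sum_sub_distrib]
    _ ≤ ∑ j, α / 2 * (x j / W - y j / W) ^ 2 := Finset.sum_le_sum fun j _ =>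
        hdiff _ _ (abs_div_le_of_mem_box hW hδρ hx j) (abs_div_le_of_mem_box hW hδρ hy j)
    _ = α / W ^ 2 * (∑ j, (x - y) j ^ 2) / 2 := by
        rw [Finset.mul_sum, Finset.sum_div]
        refine Finset.sum_congr rfl fun j _ => ?_
        rw [← sub_div, div_pow, Pi.sub_apply]
        ring
    _ ≤ energy m W α (x - y) / 2 := by
        gcongr
        exact sum_sq_le_energy (x - y)

theorem integral_exp_neg_sum_bounds (hg : Continuous g) (hC : 0 ≤ C)
    (heven : ∀ s, |s| ≤ ρ → |g s + g (-s)| ≤ 2 * (C * s ^ 4))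
    (hdiff : ∀ s t, |s| ≤ ρ → |t| ≤ ρ → g s - C * s ^ 4 - g t ≤ α / 2 * (s - t) ^ 2)
    (hα : 0 < α) (hL : 0 < L) (hLW : L ≤ W) (hLm : L ≤ m) (hδ : 0 < δ) (hδρ : δ ≤ ρ) :
    let η := C * (48 * Real.exp ((1 + 3 / α) / 4) * (m / L ^ 2))
    let X := ∫ x, Real.exp (-∑ j, g (x j / W)) ∂gibbs (box m (δ * W)) (energy m W α)
    1 - η ≤ X ∧ (1 - 2 * η) * X ≤ 1 := by
  intro η X
  have hW : 0 < W := hL.trans_le hLW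
  have hS : IsSymmetricConvexBody (box m (δ * W)) := isSymmetricConvexBody_box (by positivity)
  have hG : Continuous fun x : Fin m → ℝ => ∑ j, g (x j / W) := by fun_prop
  have hR : Continuous fun x : Fin m → ℝ => C * ∑ j, (x j / W) ^ 4 := by fun_prop
  have : 0 ≤ X := integral_nonneg fun _ => (Real.exp_pos _).le
  have hRη : ∫ x, C * ∑ j, (x j / W) ^ 4 ∂gibbs (box m (δ * W)) (energy m W α) ≤ η := by
    rw [integral_const_mul]
    exact mul_le_mul_of_nonneg_left
      (integral_sum_coord_pow_four_le hα hL hLW hLm (by positivity)) hC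
  constructor
  · linarith [hS.one_sub_le_integral_exp_neg (Q := energy m W α) hG hR fun x hx =>
      abs_sum_add_sum_neg_le heven hW hδρ hx]
  · refine le_trans ?_ (hS.one_sub_two_mul_mul_integral_exp_neg_le hG hR
      (fun x hx => abs_sum_add_sum_neg_le heven hW hδρ hx)
      fun x hx y hy => sum_sub_sum_le_half_energy_sub hdiff hW hδρ hx hy)
    gcongr

variable {ι : Type*} {l : Filter ι}

theorem tendsto_one_of_one_sub_le_of_mul_le_one {X η : ι → ℝ} (hη : Tendsto η l (𝓝 0))
    (h : ∀ᶠ i in l, 1 - η i ≤ X i ∧ (1 - 2 * η i) * X i ≤ 1) :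
    Tendsto X l (𝓝 1) := by
  have hlim : Tendsto (fun i => 1 - 2 * η i) l (𝓝 1) := by
    simpa using (hη.const_mul 2).const_sub 1
  refine tendsto_of_tendsto_of_tendsto_of_le_of_le' (g := fun i => 1 - η i)
    (h := fun i => (1 - 2 * η i)⁻¹) ?_ ?_ (h.mono fun _ hi => hi.1) ?_
  · simpa using hη.const_sub 1
  · simpa using hlim.inv₀ one_ne_zero
  · filter_upwards [h, hlim.eventually (lt_mem_nhds one_pos)] with i hi hpos
    rw [← one_div, le_div_iff₀' hpos]
    exact hi.2

theorem tendsto_div_min_sq_zero {m : ι → ℕ} {W : ι → ℝ} (hm : Tendsto m l atTop)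
    (hmW : Tendsto (fun i => m i / W i ^ 2) l (𝓝 0)) :
    Tendsto (fun i => m i / min (W i) (m i) ^ 2) l (𝓝 0) := by
  have hinv : Tendsto (fun i => (m i : ℝ)⁻¹) l (𝓝 0) :=
    tendsto_inv_atTop_zero.comp (tendsto_natCast_atTop_atTop.comp hm)
  refine squeeze_zero (fun i => by positivity) (fun i => ?_) (by simpa using hmW.add hinv)
  rcases min_choice (W i) (m i) with h | h <;> rw [h]
  · exact le_add_of_nonneg_right (by positivity)
  · rw [sq, div_self_mul_self']
    exact le_add_of_nonneg_left (by positivity)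

theorem avg_poly_tendsto_one_general {m : ι → ℕ} {W δ : ι → ℝ} (hα : 0 < α)
    (hm : Tendsto m l atTop) (hW : ∀ᶠ i in l, 0 < W i)
    (hmW : Tendsto (fun i => m i / W i ^ 2) l (𝓝 0)) (hδ : Tendsto δ l (𝓝[>] 0))
    (hg : Differentiable ℝ g) (hg' : deriv g =O[𝓝 0] fun s => s ^ 2)
    (heven : (fun s => g s + g (-s)) =O[𝓝 0] fun s => s ^ 4) :
    Tendsto (fun i =>
        (∫ x in box (m i) (δ i * W i), Real.exp (-∑ j, g (x j / W i)) * muR (m i) (W i) α x) /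
          ∫ x in box (m i) (δ i * W i), muR (m i) (W i) α x)
      l (𝓝 1) := by
  obtain ⟨C, hC, ρ, hρ, heven_le, hdiff_le⟩ := exists_quartic_bounds hg hg' heven (half_pos hα)
  have hη := ((tendsto_div_min_sq_zero hm hmW).const_mul
    (48 * Real.exp ((1 + 3 / α) / 4))).const_mul C
  simp only [mul_zero] at hη
  simp only [← integral_gibbs_box]
  refine tendsto_one_of_one_sub_le_of_mul_le_one hη ?_
  filter_upwards [hW, hm.eventually_gt_atTop 0, hδ.eventually (Ioc_mem_nhdsGT hρ)]
    with i hWi hmi hδi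
  exact integral_exp_neg_sum_bounds hg.continuous hC heven_le hdiff_le hα
    (lt_min hWi (Nat.cast_pos.mpr hmi)) (min_le_left _ _) (min_le_right _ _) hδi.1 hδi.2

variable {θ κ : ℝ}

theorem tendsto_two_mul_natCast_add_one_atTop :
    Tendsto (fun n : ℕ => (2 * n + 1 : ℝ)) atTop atTop :=
  tendsto_atTop_add_const_right _ _ (tendsto_natCast_atTop_atTop.const_mul_atTop two_pos)

theorem tendsto_Wn_atTop (hθ : 0 < θ) : Tendsto (Wn θ) atTop atTop :=
  (tendsto_rpow_atTop (by linarith : 0 < (1 + θ) / 2)).comp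
    tendsto_two_mul_natCast_add_one_atTop

theorem Wn_sq (n : ℕ) : Wn θ n ^ 2 = (2 * n + 1 : ℝ) ^ (1 + θ) := by
  rw [Wn, ← Real.rpow_mul_natCast (by positivity)]
  congr 1
  norm_num

theorem Wn_pos (n : ℕ) : 0 < Wn θ n := Real.rpow_pos_of_pos (by positivity) _

theorem tendsto_dl_nhdsGT_zero (hθ : 0 < θ) (hκ : 0 < κ) : Tendsto (dl θ κ) atTop (𝓝[>] 0) :=
  tendsto_nhdsWithin_iff.mpr ⟨(tendsto_rpow_neg_atTop hκ).comp (tendsto_Wn_atTop hθ),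
    .of_forall fun n => Real.rpow_pos_of_pos (Wn_pos n) _⟩

theorem tendsto_div_Wn_sq_zero (hθ : 0 < θ) :
    Tendsto (fun n : ℕ => (2 * n + 1 : ℕ) / Wn θ n ^ 2) atTop (𝓝 0) := by
  refine ((tendsto_rpow_neg_atTop hθ).comp
    tendsto_two_mul_natCast_add_one_atTop).congr fun n => ?_
  have hpos : (0 : ℝ) < 2 * n + 1 := by positivity
  rw [Function.comp_apply, Wn_sq, Nat.cast_add_one, Nat.cast_mul, Nat.cast_two,
    show -θ = 1 - (1 + θ) by ring, Real.rpow_sub hpos, Real.rpow_one]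

end Limit

/-- for a real polynomial `g(x) = ∑_{j=3}^{q} c_j x^j` (lowest degree ≥ 3),
the average `⟨exp{−∑_{j=−n}^{n} g(x_j/W)}⟩₀` with real parameter `γ = α > 0` tends to `1`. -/
theorem avg_poly_tendsto_one (α θ κ : ℝ) (hα : 0 < α)
    (hθ : 0 < θ) (hθ1 : θ ≤ 1) (hκ : 0 < κ) (hκθ : κ < θ / 8)
    (q : ℕ) (c : ℕ → ℝ) :
    Filter.Tendsto (fun n : ℕ =>
        (∫ x in box (2*n+1) (dl θ κ n * Wn θ n),
            Real.exp (-(∑ j, ∑ i ∈ Finset.Icc 3 q, c i * (x j / Wn θ n)^i)) *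
              muR (2*n+1) (Wn θ n) α x) /
          (∫ x in box (2*n+1) (dl θ κ n * Wn θ n), muR (2*n+1) (Wn θ n) α x))
      Filter.atTop (nhds 1) := by
  exact avg_poly_tendsto_one_general
    (g := fun s => ∑ i ∈ Finset.Icc 3 q, c i * s ^ i) (m := fun n => 2 * n + 1) hα
    (tendsto_atTop_mono (fun n => show n ≤ 2 * n + 1 by omega) tendsto_id) (.of_forall Wn_pos)
    (tendsto_div_Wn_sq_zero hθ) (tendsto_dl_nhdsGT_zero hθ hκ) (by fun_prop)
    (deriv_sum_Icc_three_isBigO q c) (sum_Icc_three_add_comp_neg_isBigO q c)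
end

section
/- Let p≥1, t∈ℂ with t≠0, let C be a normal p×p complex matrix with distinct eigenvalues c₁,…,c_p (listed in some fixed order), and let D=diag(d₁,…,d_p) with distinct real numbers d₁,…,d_p. Then ∫_{U(p)} exp{t·Tr(C U* D U)} dμ(U) = (∏_{j=1}^{p−1} j!)·det[exp{t c_i d_j}]_{i,j=1}^{p} / (t^{p(p−1)/2}·Δ(c)·Δ(d)), where μ is the normalized Haar probability measure on the unitary group U(p), U* is the conjugate transpose of U, and Δ(c)=∏_{1≤i<j≤p}(c_j−c_i), Δ(d)=∏_{1≤i<j≤p}(d_j−d_i) are Vandermonde determinants. -/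
open MeasureTheory

/-- Borel σ-algebra on the space of complex matrices. -/
noncomputable instance (p : ℕ) : MeasurableSpace (Matrix (Fin p) (Fin p) ℂ) := borel _

instance (p : ℕ) : BorelSpace (Matrix (Fin p) (Fin p) ℂ) := ⟨rfl⟩

/-- The Vandermonde-type product `∏_{i<j}(v_j − v_i)`. -/
noncomputable def vandermonde (p : ℕ) (v : Fin p → ℂ) : ℂ :=
  ∏ ij ∈ Finset.univ.filter (fun ij : Fin p × Fin p => ij.1 < ij.2), (v ij.2 - v ij.1)

/-!
Put `B = U* diag(d) U` and `I(c) = ∫ exp (∑ i, c i * B i i) dμ(U)`; diagonalizing `C` and absorbing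
`t` into `c` reduces the theorem to this integral.

Differentiating the invariance of the measure along one-parameter subgroups gives Schwinger–Dyson
equations, which read as a recursion on principal minors of `B`. Solved by induction on the size
of the minor, the recursion says that inserting `det (B - z)` under the integral amounts to applying
`∏ i, (∂/∂cᵢ - z)` to `Δ(c) I(c)`. But `det (B - z) = ∏ i, (d i - z)` is constant, so `Δ(c) I(c)` is
a joint eigenfunction. On the connected set of vectors `c` with distinct coordinates it is
therefore a combination of the exponentials `exp (∑ i, c i * d (a i))` with `a : Fin p → Fin p`.

It is also antisymmetric in `c`, hence a multiple of `det [exp (c i * d j)]`. The factor is found by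
letting `c` tend to `0` along an arithmetic progression.
-/

section CoordinateSystem

open MvPolynomial

open scoped IsMulCommutative in
theorem exists_algHom_X_eq_of_commute {ι k A : Type*} [CommSemiring k] [Semiring A] [Algebra k A]
    (T : ι → A) (hT : ∀ i j, Commute (T i) (T j)) :
    ∃ φ : MvPolynomial ι k →ₐ[k] A, ∀ i, φ (X i) = T i := by
  have : IsMulCommutative (Algebra.adjoin k (Set.range T)) :=
    Algebra.isMulCommutative_adjoin k (by rintro _ ⟨i, rfl⟩ _ ⟨j, rfl⟩; exact hT i j)
  let T' : ι → Algebra.adjoin k (Set.range T) := fun i ↦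
    ⟨T i, Algebra.subset_adjoin (Set.mem_range_self i)⟩
  exact ⟨(Algebra.adjoin k (Set.range T)).val.comp (aeval T'), fun i ↦ by simp [T']⟩

theorem derivation_prod_eq_mul_sum {k V κ : Type*} [CommSemiring k] [CommSemiring V] [Algebra k V]
    (D : Derivation k V V) (S : Finset κ) (g s : κ → V) (h : ∀ q ∈ S, D (g q) = g q * s q) :
    D (∏ q ∈ S, g q) = (∏ q ∈ S, g q) * ∑ q ∈ S, s q := by
  classical
  induction S using Finset.induction_on with
  | empty => simp
  | insert m S hm ih =>
    rw [Finset.prod_insert hm, Finset.sum_insert hm, Derivation.leibniz,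
      ih fun q hq ↦ h q (Finset.mem_insert_of_mem hq), h m (Finset.mem_insert_self m S)]
    simp only [smul_eq_mul]
    ring

variable {ι k V : Type*} [DecidableEq ι] [CommRing k] [CommRing V] [Algebra k V]

/-- An algebra with coordinates `x i`, the corresponding partial derivatives `D i`, and inverses
`r i j` of the differences `x i - x j`. The partial derivatives commute because they come from an
action `φ` of the polynomial ring, by constant coefficient differential operators. The model is
the algebra of smooth functions on the locus where all coordinates are distinct. -/
structure IsCoordinateSystem (φ : MvPolynomial ι k →ₐ[k] Module.End k V) (D : ι → Derivation k V V)
    (x : ι → V) (r : ι → ι → V) : Prop where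
  map_X_apply : ∀ i f, φ (X i) f = D i f
  derivation_coord : ∀ i j, D i (x j) = if i = j then 1 else 0
  sub_mul_inv : ∀ i j, i ≠ j → (x i - x j) * r i j = 1

namespace IsCoordinateSystem

variable {φ : MvPolynomial ι k →ₐ[k] Module.End k V} {D : ι → Derivation k V V}
  {x : ι → V} {r : ι → ι → V}

theorem inv_swap (H : IsCoordinateSystem φ D x r) {i j : ι} (hij : i ≠ j) : r j i = -r i j := by
  linear_combination r i j * (-H.sub_mul_inv j i hij.symm) - r j i * H.sub_mul_inv i j hij

theorem inv_mul_inv (H : IsCoordinateSystem φ D x r) {i m l : ι} (him : i ≠ m) (hil : i ≠ l)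
    (hlm : l ≠ m) : r i m * r i l = r i m * r m l + r i l * r l m := by
  rw [H.inv_swap hlm]
  linear_combination -(r i m * r i l) * H.sub_mul_inv l m hlm +
    r i l * r l m * H.sub_mul_inv i m him - r i m * r l m * H.sub_mul_inv i l hil

theorem derivation_inv (H : IsCoordinateSystem φ D x r) {i j : ι} (m : ι) (hij : i ≠ j) :
    D m (r i j) = ((if m = j then 1 else 0) - if m = i then 1 else 0) * r i j ^ 2 := by
  rw [(D m).leibniz_of_mul_eq_one ((mul_comm _ _).trans (H.sub_mul_inv i j hij)), map_sub,
    H.derivation_coord, H.derivation_coord, smul_eq_mul]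
  ring

theorem mixed_insert (H : IsCoordinateSystem φ D x r) {m : ι} {S : Finset ι} (hm : m ∉ S) (h : V) :
    φ (∏ l ∈ insert m S, X l) h = D m (φ (∏ l ∈ S, X l) h) := by
  rw [Finset.prod_insert hm, map_mul, Module.End.mul_apply, H.map_X_apply]

theorem mixed_mul_of_derivation_eq_zero (H : IsCoordinateSystem φ D x r) (S : Finset ι) {a : V}
    (ha : ∀ l ∈ S, D l a = 0) (h : V) :
    φ (∏ l ∈ S, X l) (a * h) = a * φ (∏ l ∈ S, X l) h := by
  induction S using Finset.induction_on with
  | empty => simp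
  | insert m S hm ih =>
    rw [H.mixed_insert hm, H.mixed_insert hm, ih fun l hl ↦ ha l (Finset.mem_insert_of_mem hl),
      Derivation.leibniz, ha m (Finset.mem_insert_self m S)]
    simp

/-- The mixed partial derivative in the directions `S`, conjugated by the product of the differences
`x i - x l` for `l ∈ S`. -/
noncomputable def conjMixed (φ : MvPolynomial ι k →ₐ[k] Module.End k V) (x : ι → V)
    (r : ι → ι → V) (i : ι) (S : Finset ι) (h : V) : V :=
  (∏ l ∈ S, (x i - x l)) * φ (∏ l ∈ S, X l) ((∏ l ∈ S, r i l) * h)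

theorem conjMixed_insert (H : IsCoordinateSystem φ D x r) {i m : ι} {S : Finset ι} (him : i ≠ m)
    (hm : m ∉ S) (hi : i ∉ S) (h : V) :
    conjMixed φ x r i (insert m S) h =
      D m (conjMixed φ x r i S h) + r i m * conjMixed φ x r i S h := by
  have hpull : ∀ l ∈ S, D l (r i m) = 0 := fun l hl ↦ by
    simp [H.derivation_inv l him, ne_of_mem_of_not_mem hl hm, ne_of_mem_of_not_mem hl hi]
  have hprod : D m (∏ l ∈ S, (x i - x l)) = 0 := by
    rw [derivation_prod_eq_mul_sum (D m) S _ 0 fun l hl ↦ ?_]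
    · simp
    · simp [H.derivation_coord, (ne_of_mem_of_not_mem hl hm).symm, him.symm]
  unfold conjMixed
  rw [H.mixed_insert hm, Finset.prod_insert hm, Finset.prod_insert hm, mul_assoc (r i m),
    H.mixed_mul_of_derivation_eq_zero S hpull, Derivation.leibniz, Derivation.leibniz,
    H.derivation_inv m him, hprod]
  simp only [smul_eq_mul, if_neg him.symm, if_true]
  set q := φ (∏ l ∈ S, X l) ((∏ l ∈ S, r i l) * h)
  linear_combination ((∏ l ∈ S, (x i - x l)) * (D m q + r i m * q)) * H.sub_mul_inv i m him

theorem derivation_inv_mul (H : IsCoordinateSystem φ D x r) {i l m : ι} (hil : i ≠ l) (hmi : m ≠ i)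
    (hml : m ≠ l) (g : V) : D m (r i l * g) = r i l * D m g := by
  rw [Derivation.leibniz, H.derivation_inv m hil]
  simp [hmi, hml]

theorem conjMixed_eq (H : IsCoordinateSystem φ D x r) (S : Finset ι) (h : V) {i : ι} (hi : i ∉ S) :
    conjMixed φ x r i S h =
      φ (∏ l ∈ S, X l) h + ∑ l ∈ S, r i l * conjMixed φ x r l (S.erase l) h := by
  induction S using Finset.induction_on generalizing i with
  | empty => simp [conjMixed]
  | insert m S hm ih =>
    obtain ⟨him, hiS⟩ := not_or.1 (mt Finset.mem_insert.2 hi)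
    have hterm : ∀ l ∈ S, r i l * conjMixed φ x r l ((insert m S).erase l) h =
        D m (r i l * conjMixed φ x r l (S.erase l) h) + (r i m * (r i l - r m l)) *
          conjMixed φ x r l (S.erase l) h := by
      intro l hl
      have hlm : l ≠ m := ne_of_mem_of_not_mem hl hm
      have hil : i ≠ l := (ne_of_mem_of_not_mem hl hiS).symm
      rw [Finset.erase_insert_of_ne hlm.symm, H.conjMixed_insert hlm (by simp [hm]) (by simp),
        H.derivation_inv_mul hil (Ne.symm him) hlm.symm]
      linear_combination -conjMixed φ x r l (S.erase l) h * H.inv_mul_inv him hil hlm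
    rw [H.conjMixed_insert him hm hiS, Finset.sum_insert hm, Finset.erase_insert hm,
      H.mixed_insert hm, Finset.sum_congr rfl hterm, ih hm, ih hiS, map_add, map_sum]
    simp only [mul_add, Finset.mul_sum, Finset.sum_add_distrib, mul_sub, sub_mul,
      Finset.sum_sub_distrib, mul_assoc]
    ring

theorem mixed_eq_sub_sum_conjMixed (H : IsCoordinateSystem φ D x r) {I : Finset ι} {i : ι}
    (hi : i ∈ I) (h : V) :
    φ (∏ l ∈ I, X l) h = D i (conjMixed φ x r i (I.erase i) h) -
      ∑ j ∈ I.erase i, r i j * conjMixed φ x r j (I.erase j) h := by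
  have hterm : ∀ l ∈ I.erase i, D i (r i l * conjMixed φ x r l ((I.erase i).erase l) h) =
      r i l * conjMixed φ x r l (I.erase l) h := by
    intro l hl
    have hli : l ≠ i := Finset.ne_of_mem_erase hl
    have herase : I.erase l = insert i ((I.erase i).erase l) := by
      rw [Finset.erase_right_comm, Finset.insert_erase (Finset.mem_erase.2 ⟨hli.symm, hi⟩)]
    rw [herase, H.conjMixed_insert hli (by simp) (by simp), Derivation.leibniz,
      H.derivation_inv i hli.symm, H.inv_swap hli.symm]
    simp only [smul_eq_mul, if_neg hli.symm, if_true]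
    ring
  rw [H.conjMixed_eq (I.erase i) h (by simp), map_add, map_sum, ← H.mixed_insert (by simp),
    Finset.insert_erase hi, Finset.sum_congr rfl hterm, add_sub_cancel_right]

theorem derivation_prod_inv_mul (H : IsCoordinateSystem φ D x r) {I : Finset ι} {i j : ι}
    (hi : i ∈ I) (hj : j ∈ I.erase i) {v : V} (hv : D j v = v * ∑ l ∈ I.erase j, r j l) :
    D j ((∏ l ∈ I.erase i, r i l) * v) =
      (∏ l ∈ I.erase i, r i l) * v * ∑ l ∈ (I.erase i).erase j, r j l := by
  have hji : j ≠ i := Finset.ne_of_mem_erase hj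
  have hprod : D j (∏ l ∈ I.erase i, r i l) = (∏ l ∈ I.erase i, r i l) * r i j := by
    rw [derivation_prod_eq_mul_sum (D j) _ _ (fun l ↦ if j = l then r i j else 0) fun l hl ↦ ?_,
      Finset.sum_ite_eq, if_pos hj]
    rw [H.derivation_inv j (Finset.ne_of_mem_erase hl).symm]
    by_cases hjl : j = l
    · simp [← hjl, hji, sq]
    · simp [hjl, hji]
  rw [Derivation.leibniz, hv, hprod, Finset.erase_right_comm, H.inv_swap hji,
    ← Finset.sum_erase_add (I.erase j) _ (Finset.mem_erase.2 ⟨hji.symm, hi⟩)]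
  simp only [smul_eq_mul]
  ring

/-- In the application `v` is the Vandermonde product and `f I` is the integral of the principal
minor on `I`. -/
theorem mul_eq_mixed_of_recursion (H : IsCoordinateSystem φ D x r) {f : Finset ι → V}
    (hf : ∀ I : Finset ι, ∀ i ∈ I, f I = D i (f (I.erase i)) +
      ∑ j ∈ I.erase i, r i j * (f (I.erase i) - f (I.erase j)))
    (I : Finset ι) {v : V} (hv : ∀ i ∈ I, D i v = v * ∑ j ∈ I.erase i, r i j) :
    v * f I = φ (∏ i ∈ I, X i) (v * f ∅) := by
  induction I using Finset.strongInduction generalizing v with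
  | H I ih =>
  rcases I.eq_empty_or_nonempty with rfl | ⟨i, hi⟩
  · simp
  have hconj : ∀ i ∈ I, conjMixed φ x r i (I.erase i) (v * f ∅) = v * f (I.erase i) := by
    intro i hi
    rw [conjMixed, ← mul_assoc (∏ l ∈ I.erase i, r i l), ← ih (I.erase i) (Finset.erase_ssubset hi)
      fun j hj ↦ H.derivation_prod_inv_mul hi hj (hv j (Finset.mem_of_mem_erase hj)),
      ← mul_assoc, ← mul_assoc, ← Finset.prod_mul_distrib,
      Finset.prod_congr rfl fun l hl ↦ H.sub_mul_inv i l (Finset.ne_of_mem_erase hl).symm]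
    simp
  have hsum : ∑ j ∈ I.erase i, r i j * conjMixed φ x r j (I.erase j) (v * f ∅) =
      v * ∑ j ∈ I.erase i, r i j * f (I.erase j) := by
    rw [Finset.mul_sum]
    refine Finset.sum_congr rfl fun j hj ↦ ?_
    rw [hconj j (Finset.mem_of_mem_erase hj)]
    ring
  rw [H.mixed_eq_sub_sum_conjMixed hi, hconj i hi, hsum, Derivation.leibniz, hv i hi, hf I i hi]
  simp only [mul_sub, Finset.sum_sub_distrib, smul_eq_mul, ← Finset.sum_mul]
  ring

end IsCoordinateSystem

end CoordinateSystem

section LinearOrder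

variable {ι k V : Type*} [Fintype ι] [LinearOrder ι] [CommRing k] [CommRing V] [Algebra k V]

theorem sum_lt_ite_add_ite_eq_sum_erase {M : Type*} [AddCommMonoid M] (i : ι) (s : ι → M) :
    ∑ q : ι × ι with q.1 < q.2, ((if i = q.2 then s q.1 else 0) + if i = q.1 then s q.2 else 0) =
      ∑ j ∈ Finset.univ.erase i, s j := by
  have hsplit : ∀ j, (if j ≠ i then s j else 0) =
      (if j < i then s j else 0) + if i < j then s j else 0 := fun j ↦ by
    obtain h | rfl | h := lt_trichotomy j i
    · simp [h, h.ne, h.not_gt]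
    · simp
    · simp [h, h.ne', h.not_gt]
  have hswap : ∀ (a b j : ι) (m : M),
      (if a < b then if i = j then m else 0 else 0) = if i = j then if a < b then m else 0 else 0 :=
    fun a b j m ↦ by split_ifs <;> rfl
  rw [← Finset.filter_ne' Finset.univ i, Finset.sum_filter (fun j ↦ j ≠ i),
    Finset.sum_congr rfl fun j _ ↦ hsplit j, Finset.sum_add_distrib, Finset.sum_add_distrib]
  congr 1
  · simp [Finset.sum_filter, Fintype.sum_prod_type, hswap]
  · simp [Finset.sum_filter, Fintype.sum_prod_type_right, hswap]

theorem IsCoordinateSystem.derivation_prod_lt_sub {φ : MvPolynomial ι k →ₐ[k] Module.End k V}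
    {D : ι → Derivation k V V} {x : ι → V} {r : ι → ι → V} (H : IsCoordinateSystem φ D x r)
    (i : ι) :
    D i (∏ q : ι × ι with q.1 < q.2, (x q.2 - x q.1)) =
      (∏ q : ι × ι with q.1 < q.2, (x q.2 - x q.1)) * ∑ j ∈ Finset.univ.erase i, r i j := by
  rw [← sum_lt_ite_add_ite_eq_sum_erase]
  refine derivation_prod_eq_mul_sum (D i) _ _ _ fun q hq ↦ ?_
  have hlt : q.1 < q.2 := (Finset.mem_filter.1 hq).2
  have hinv := H.sub_mul_inv q.2 q.1 hlt.ne'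
  rw [map_sub, H.derivation_coord, H.derivation_coord]
  obtain rfl | h₂ := eq_or_ne i q.2
  · simp [hlt.ne', hinv]
  obtain rfl | h₁ := eq_or_ne i q.1
  · simp [hlt.ne, H.inv_swap hlt.ne', hinv]
  · simp [h₁, h₂]

end LinearOrder

section SmoothFunctions

open TopologicalSpace (Opens)
open scoped ContDiff

variable {𝕜 E : Type*} [RCLike 𝕜] [NormedAddCommGroup E] [NormedSpace 𝕜 E]

variable (𝕜) in
/-- The algebra of smooth functions on the open set `Ω`, as functions on the subtype: an element is
the restriction of some total function which is smooth on `Ω`. -/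
def SmoothFn (Ω : Opens E) : Subalgebra 𝕜 (Ω → 𝕜) where
  carrier := {f | ∃ g : E → 𝕜, ContDiffOn 𝕜 ∞ g Ω ∧ ∀ x : Ω, f x = g x}
  mul_mem' := by
    rintro f₁ f₂ ⟨g₁, hg₁, h₁⟩ ⟨g₂, hg₂, h₂⟩
    exact ⟨g₁ * g₂, hg₁.mul hg₂, fun x ↦ by simp [h₁, h₂]⟩
  add_mem' := by
    rintro f₁ f₂ ⟨g₁, hg₁, h₁⟩ ⟨g₂, hg₂, h₂⟩
    exact ⟨g₁ + g₂, hg₁.add hg₂, fun x ↦ by simp [h₁, h₂]⟩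
  algebraMap_mem' a := ⟨fun _ ↦ a, contDiffOn_const, fun _ ↦ rfl⟩

namespace SmoothFn

variable {Ω : Opens E}

instance : CoeFun (SmoothFn 𝕜 Ω) fun _ ↦ Ω → 𝕜 := ⟨Subtype.val⟩

@[ext]
theorem ext {f g : SmoothFn 𝕜 Ω} (h : ∀ x, f x = g x) : f = g :=
  Subtype.ext (funext h)

/-- The restriction to `Ω` of a function on the whole space that is smooth on `Ω`. -/
def restrict (g : E → 𝕜) (hg : ContDiffOn 𝕜 ∞ g Ω) : SmoothFn 𝕜 Ω :=
  ⟨fun x ↦ g x, g, hg, fun _ ↦ rfl⟩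

@[simp]
theorem restrict_apply (g : E → 𝕜) (hg : ContDiffOn 𝕜 ∞ g Ω) (x : Ω) : restrict g hg x = g x := rfl

/-- An extension of `f` to the whole space, smooth on `Ω`. -/
noncomputable def extension (f : SmoothFn 𝕜 Ω) : E → 𝕜 := f.2.choose

theorem contDiffOn_extension (f : SmoothFn 𝕜 Ω) : ContDiffOn 𝕜 ∞ (extension f) Ω :=
  f.2.choose_spec.1

theorem apply_eq_extension (f : SmoothFn 𝕜 Ω) (x : Ω) : f x = extension f x :=
  f.2.choose_spec.2 x

theorem contDiffAt_extension (f : SmoothFn 𝕜 Ω) (x : Ω) : ContDiffAt 𝕜 ∞ (extension f) x :=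
  (contDiffOn_extension f).contDiffAt (Ω.isOpen.mem_nhds x.2)

theorem differentiableAt_extension (f : SmoothFn 𝕜 Ω) (x : Ω) :
    DifferentiableAt 𝕜 (extension f) x :=
  (contDiffAt_extension f x).differentiableAt (by simp)

theorem contDiffOn_fderiv_extension (f : SmoothFn 𝕜 Ω) :
    ContDiffOn 𝕜 ∞ (fderiv 𝕜 (extension f)) Ω :=
  (contDiffOn_extension f).fderiv_of_isOpen Ω.isOpen (by simp)

/-- The directional derivative of a smooth function along `v`, as a function on `Ω`. -/
noncomputable def dirDerivFn (v : E) (f : SmoothFn 𝕜 Ω) : SmoothFn 𝕜 Ω :=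
  restrict (fun x ↦ fderiv 𝕜 (extension f) x v)
    ((contDiffOn_fderiv_extension f).clm_apply contDiffOn_const)

theorem dirDerivFn_apply (v : E) {f : SmoothFn 𝕜 Ω} {g : E → 𝕜} (h : ∀ x : Ω, f x = g x) (x : Ω) :
    dirDerivFn v f x = fderiv 𝕜 g x v := by
  have hfg : extension f =ᶠ[nhds (x : E)] g := by
    filter_upwards [Ω.isOpen.mem_nhds x.2] with y hy
    rw [← apply_eq_extension f ⟨y, hy⟩, h ⟨y, hy⟩]
  exact DFunLike.congr_fun hfg.fderiv_eq v

variable (𝕜 Ω) in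
/-- The directional derivative along `v`, as a derivation of the algebra of smooth functions. -/
noncomputable def dirDeriv (v : E) : Derivation 𝕜 (SmoothFn 𝕜 Ω) (SmoothFn 𝕜 Ω) :=
  Derivation.mk'
    { toFun := dirDerivFn v
      map_add' := fun f g ↦ by
        ext x
        rw [dirDerivFn_apply v (g := extension f + extension g)
          (fun x ↦ by simp [← apply_eq_extension]),
          fderiv_add (differentiableAt_extension f x) (differentiableAt_extension g x)]
        rfl
      map_smul' := fun a f ↦ by
        ext x
        rw [dirDerivFn_apply v (g := a • extension f) (fun x ↦ by simp [← apply_eq_extension]),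
          fderiv_const_smul (differentiableAt_extension f x)]
        rfl }
    fun f g ↦ by
      ext x
      change dirDerivFn v (f * g) x = _
      rw [dirDerivFn_apply v (g := extension f * extension g)
        (fun x ↦ by simp [← apply_eq_extension]),
        fderiv_mul (differentiableAt_extension f x) (differentiableAt_extension g x)]
      simp only [← apply_eq_extension]
      rfl

theorem dirDeriv_apply (v : E) {f : SmoothFn 𝕜 Ω} {g : E → 𝕜} (h : ∀ x : Ω, f x = g x) (x : Ω) :
    dirDeriv 𝕜 Ω v f x = fderiv 𝕜 g x v :=
  dirDerivFn_apply v h x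

theorem dirDeriv_apply_of_hasFDerivAt (v : E) {f : SmoothFn 𝕜 Ω} {g : E → 𝕜} {g' : E →L[𝕜] 𝕜}
    (h : ∀ x : Ω, f x = g x) {x : Ω} (hg : HasFDerivAt g g' x) : dirDeriv 𝕜 Ω v f x = g' v := by
  rw [dirDeriv_apply v h, hg.fderiv]

theorem dirDeriv_comm (v w : E) (f : SmoothFn 𝕜 Ω) :
    dirDeriv 𝕜 Ω v (dirDeriv 𝕜 Ω w f) = dirDeriv 𝕜 Ω w (dirDeriv 𝕜 Ω v f) := by
  ext x
  have hsecond : ∀ v w : E, dirDeriv 𝕜 Ω v (dirDeriv 𝕜 Ω w f) x =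
      fderiv 𝕜 (fderiv 𝕜 (extension f)) x v w := fun v w ↦ by
    have hdiff : DifferentiableAt 𝕜 (fderiv 𝕜 (extension f)) x :=
      ((contDiffOn_fderiv_extension f).contDiffAt (Ω.isOpen.mem_nhds x.2)).differentiableAt
        (by simp)
    rw [dirDeriv_apply v (g := fun y ↦ fderiv 𝕜 (extension f) y w)
      fun y ↦ dirDeriv_apply w (apply_eq_extension f) y,
      fderiv_clm_apply hdiff (by fun_prop)]
    simp
  rw [hsecond, hsecond]
  have htwo : minSmoothness 𝕜 2 ≤ ∞ := by
    rw [minSmoothness_of_isRCLikeNormedField]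
    exact WithTop.coe_le_coe.2 le_top
  exact (contDiffAt_extension f x).isSymmSndFDerivAt htwo v w

variable {ι : Type*} [Fintype ι] [DecidableEq ι]

/-- The derivation `∂/∂xᵢ` on the smooth functions on an open set of a coordinate space. -/
noncomputable abbrev partialDeriv (Ω : Opens (ι → 𝕜)) (i : ι) :
    Derivation 𝕜 (SmoothFn 𝕜 Ω) (SmoothFn 𝕜 Ω) :=
  dirDeriv 𝕜 Ω (Pi.single i 1)

theorem exists_algHom_X_apply_eq_partialDeriv (Ω : Opens (ι → 𝕜)) :
    ∃ φ : MvPolynomial ι 𝕜 →ₐ[𝕜] Module.End 𝕜 (SmoothFn 𝕜 Ω),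
      ∀ i f, φ (MvPolynomial.X i) f = partialDeriv Ω i f := by
  obtain ⟨φ, hφ⟩ := exists_algHom_X_eq_of_commute (k := 𝕜)
    (fun i ↦ (partialDeriv Ω i : Module.End 𝕜 (SmoothFn 𝕜 Ω)))
    fun i j ↦ LinearMap.ext (dirDeriv_comm _ _)
  exact ⟨φ, fun i ↦ DFunLike.congr_fun (hφ i)⟩

/-- The constant coefficient differential operator `P(∂)` attached to a polynomial `P`. -/
noncomputable def diffOp (Ω : Opens (ι → 𝕜)) :
    MvPolynomial ι 𝕜 →ₐ[𝕜] Module.End 𝕜 (SmoothFn 𝕜 Ω) :=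
  (exists_algHom_X_apply_eq_partialDeriv Ω).choose

theorem diffOp_X_apply (Ω : Opens (ι → 𝕜)) (i : ι) (f : SmoothFn 𝕜 Ω) :
    diffOp Ω (MvPolynomial.X i) f = partialDeriv Ω i f :=
  (exists_algHom_X_apply_eq_partialDeriv Ω).choose_spec i f

end SmoothFn

end SmoothFunctions

section JointEigenvectors

open Polynomial (X C)

variable {k A : Type*} [Field k] [CommRing A] [Algebra k A]

theorem coeff_mem_of_forall_eval_algebraMap_mem [Infinite k] (J : Submodule k A)
    (q : Polynomial A) (h : ∀ z : k, q.eval (algebraMap k A z) ∈ J) (n : ℕ) : q.coeff n ∈ J := by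
  by_contra hn
  obtain ⟨f, hf, hJ⟩ := Submodule.exists_le_ker_of_notMem hn
  let Q : Polynomial k :=
    ∑ m ∈ Finset.range (q.natDegree + 1), Polynomial.monomial m (f (q.coeff m))
  have hQ : Q = 0 := Polynomial.funext fun z ↦ by
    have hz : f (q.eval (algebraMap k A z)) = 0 := hJ (h z)
    simp_rw [Polynomial.eval_eq_sum_range, map_sum, ← map_pow, mul_comm (q.coeff _),
      ← Algebra.smul_def, map_smul, smul_eq_mul] at hz
    simpa [Q, Polynomial.eval_finsetSum, mul_comm] using hz
  have hnQ : Q.coeff n = f (q.coeff n) := by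
    by_cases hdeg : n ≤ q.natDegree
    · simp [Q, Polynomial.coeff_monomial, hdeg]
    · simp [Q, Polynomial.coeff_monomial, hdeg,
        Polynomial.coeff_eq_zero_of_natDegree_lt (not_le.1 hdeg)]
  exact hf (by rw [← hnQ, hQ, Polynomial.coeff_zero])

theorem eval_mem_of_forall_eval_algebraMap_mem [Infinite k] (I : Ideal A) (q : Polynomial A)
    (h : ∀ z : k, q.eval (algebraMap k A z) ∈ I) (a : A) : q.eval a ∈ I := by
  rw [Polynomial.eval_eq_sum_range]
  exact I.sum_mem fun n _ ↦ I.mul_mem_right _ <|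
    coeff_mem_of_forall_eval_algebraMap_mem (I.restrictScalars k) q h n

variable {ι W : Type*} [Fintype ι] [AddCommGroup W] [Module k W]

/-- Substituting `z = T i` in the eigenvalue equations kills their left-hand side. -/
theorem aeval_nodal_apply_eq_zero [Infinite k] (φ : A →ₐ[k] Module.End k W) (T : ι → A) (d : ι → k)
    {w : W} (h : ∀ z : k, φ (∏ i, (T i - algebraMap k A z)) w = (∏ i, (d i - z)) • w) (i : ι) :
    φ (Polynomial.aeval (T i) (Lagrange.nodal Finset.univ d)) w = 0 := by
  let _ : Module A W := Module.compHom W φ.toRingHom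
  let q : Polynomial A := ∏ i, (C (T i) - X) - ∏ i, (C (algebraMap k A (d i)) - X)
  have hq : ∀ z : k, q.eval (algebraMap k A z) ∈ Ideal.torsionOf A W w := fun z ↦ by
    change φ (q.eval (algebraMap k A z)) w = 0
    have hconst : ∏ i, (algebraMap k A (d i) - algebraMap k A z) =
      algebraMap k A (∏ i, (d i - z)) := by simp
    simp only [q, Polynomial.eval_sub, Polynomial.eval_prod, Polynomial.eval_C, Polynomial.eval_X,
      map_sub φ, LinearMap.sub_apply, h, hconst, AlgHom.commutes, Module.algebraMap_end_apply,
      sub_self]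
  have hi : φ (q.eval (T i)) w = 0 := eval_mem_of_forall_eval_algebraMap_mem _ q hq (T i)
  have hqi : q.eval (T i) =
      -((-1) ^ Fintype.card ι * Polynomial.aeval (T i) (Lagrange.nodal Finset.univ d)) := by
    have hzero : ∏ j, (T j - T i) = 0 := Finset.prod_eq_zero (Finset.mem_univ i) (sub_self _)
    simp only [q, Lagrange.nodal, map_prod, map_sub, Polynomial.aeval_X, Polynomial.aeval_C,
      Polynomial.eval_sub, Polynomial.eval_prod, Polynomial.eval_C, Polynomial.eval_X, hzero,
      zero_sub, ← Finset.card_univ, ← Finset.prod_neg, neg_sub]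
  rw [hqi] at hi
  obtain hcard | hcard := Nat.even_or_odd (Fintype.card ι) <;>
    simpa only [hcard.neg_one_pow, one_mul, neg_one_mul, neg_neg, map_neg, LinearMap.neg_apply,
      neg_eq_zero] using hi

theorem exists_sum_joint_eigenvectors [DecidableEq ι] (φ : A →ₐ[k] Module.End k W) (T : ι → A)
    {d : ι → k} (hd : Function.Injective d) {w : W}
    (h : ∀ i, φ (Polynomial.aeval (T i) (Lagrange.nodal Finset.univ d)) w = 0) :
    ∃ u : (ι → ι) → W, (∀ a i, φ (T i) (u a) = d (a i) • u a) ∧ w = ∑ a, u a := by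
  let L : ι → ι → A := fun i a ↦ Polynomial.aeval (T i) (Lagrange.basis Finset.univ d a)
  have hone : ∑ a : ι → ι, ∏ i, L i (a i) = 1 := by
    rw [← Fintype.prod_sum]
    refine Finset.prod_eq_one fun i _ ↦ ?_
    rw [← map_sum, Lagrange.sum_basis hd.injOn ⟨i, Finset.mem_univ i⟩, map_one]
  have hroot : ∀ i a, ∃ r, (T i - algebraMap k A (d a)) * L i a =
      r * Polynomial.aeval (T i) (Lagrange.nodal Finset.univ d) := fun i a ↦ by
    refine ⟨Polynomial.aeval (T i) (C (Lagrange.nodalWeight Finset.univ d a)), ?_⟩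
    simp only [L]
    rw [Lagrange.basis_eq_prod_sub_inv_mul_nodal_div (Finset.mem_univ a),
      ← Lagrange.nodal_erase_eq_nodal_div (Finset.mem_univ a),
      Lagrange.nodal_eq_mul_nodal_erase (Finset.mem_univ a)]
    simp only [map_mul, map_sub, Polynomial.aeval_X, Polynomial.aeval_C]
    ring
  refine ⟨fun a ↦ φ (∏ i, L i (a i)) w, fun a i ↦ ?_, ?_⟩
  · obtain ⟨r, hr⟩ := hroot i (a i)
    have hzero : φ ((T i - algebraMap k A (d (a i))) * ∏ i, L i (a i)) w = 0 := by
      rw [← Finset.mul_prod_erase Finset.univ (fun i ↦ L i (a i)) (Finset.mem_univ i),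
        ← mul_assoc, hr, mul_right_comm, map_mul, Module.End.mul_apply, h, map_zero]
    rwa [map_mul, Module.End.mul_apply, map_sub, LinearMap.sub_apply, AlgHom.commutes,
      Module.algebraMap_end_apply, sub_eq_zero] at hzero
  · rw [← LinearMap.sum_apply, ← map_sum, hone, map_one, Module.End.one_apply]

end JointEigenvectors

section Exponentials

open TopologicalSpace (Opens)
open scoped ContDiff

variable {ι : Type*} [Fintype ι]

theorem hasFDerivAt_exp_dotProduct (e c : ι → ℂ) :
    HasFDerivAt (fun c : ι → ℂ ↦ Complex.exp (c ⬝ᵥ e))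
      (Complex.exp (c ⬝ᵥ e) • ∑ i, e i • (ContinuousLinearMap.proj i : (ι → ℂ) →L[ℂ] ℂ)) c := by
  refine HasFDerivAt.cexp (HasFDerivAt.fun_sum fun i _ ↦ ?_)
  exact (ContinuousLinearMap.proj i : (ι → ℂ) →L[ℂ] ℂ).hasFDerivAt.mul_const (e i)

theorem contDiff_exp_dotProduct (e : ι → ℂ) :
    ContDiff ℂ ∞ fun c : ι → ℂ ↦ Complex.exp (c ⬝ᵥ e) := by
  unfold dotProduct
  fun_prop

/-- The exponential `c ↦ exp (∑ i, c i * e i)` with frequency vector `e`. -/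
noncomputable def expDot (Ω : Opens (ι → ℂ)) (e : ι → ℂ) : SmoothFn ℂ Ω :=
  SmoothFn.restrict _ (contDiff_exp_dotProduct e).contDiffOn

variable {Ω : Opens (ι → ℂ)}

theorem expDot_apply (e : ι → ℂ) (c : Ω) : expDot Ω e c = Complex.exp ((c : ι → ℂ) ⬝ᵥ e) := rfl

theorem expDot_zero : expDot Ω 0 = 1 := by
  ext c
  simp [expDot_apply]

theorem expDot_add (e f : ι → ℂ) : expDot Ω (e + f) = expDot Ω e * expDot Ω f := by
  ext c
  simp [expDot_apply, dotProduct_add, Complex.exp_add]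

variable [DecidableEq ι]

open SmoothFn (partialDeriv diffOp)

theorem partialDeriv_expDot (e : ι → ℂ) (i : ι) :
    partialDeriv Ω i (expDot Ω e) = e i • expDot Ω e := by
  ext c
  rw [SmoothFn.dirDeriv_apply_of_hasFDerivAt _ (expDot_apply e) (hasFDerivAt_exp_dotProduct e c)]
  simp [expDot_apply, Pi.single_apply, mul_comm]

theorem diffOp_prod_expDot_mul (e : ι → ℂ) (S : Finset ι) (f : SmoothFn ℂ Ω) :
    diffOp Ω (∏ i ∈ S, MvPolynomial.X i) (expDot Ω e * f) =
      expDot Ω e * diffOp Ω (∏ i ∈ S, (MvPolynomial.X i + MvPolynomial.C (e i))) f := by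
  induction S using Finset.induction_on with
  | empty => simp
  | insert m S hm ih =>
    rw [Finset.prod_insert hm, Finset.prod_insert hm, map_mul (diffOp Ω), map_mul (diffOp Ω),
      Module.End.mul_apply, Module.End.mul_apply, ih, SmoothFn.diffOp_X_apply, Derivation.leibniz,
      partialDeriv_expDot, map_add, LinearMap.add_apply, SmoothFn.diffOp_X_apply,
      ← MvPolynomial.algebraMap_eq, AlgHom.commutes, Module.algebraMap_end_apply, mul_add,
      smul_eq_mul, smul_eq_mul, mul_smul_comm, mul_smul_comm, mul_comm _ (expDot Ω e)]

theorem SmoothFn.exists_eq_const_of_partialDeriv_eq_zero (hΩ : IsPreconnected (Ω : Set (ι → ℂ)))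
    {f : SmoothFn ℂ Ω} (hf : ∀ i, partialDeriv Ω i f = 0) : ∃ a : ℂ, f = a • 1 := by
  have hderiv : Set.EqOn (fderiv ℂ (extension f)) 0 Ω := fun c hc ↦ by
    refine ContinuousLinearMap.coe_injective (LinearMap.pi_ext' fun i ↦ LinearMap.ext_ring ?_)
    exact (dirDeriv_apply _ (apply_eq_extension f) ⟨c, hc⟩).symm.trans
      (congrArg (fun g : SmoothFn ℂ Ω ↦ g ⟨c, hc⟩) (hf i))
  obtain ⟨a, ha⟩ := Ω.isOpen.exists_is_const_of_fderiv_eq_zero hΩ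
    ((contDiffOn_extension f).differentiableOn (by simp)) hderiv
  exact ⟨a, SmoothFn.ext fun c ↦ by simp [apply_eq_extension f, ha c c.2]⟩

theorem exists_eq_smul_expDot (hΩ : IsPreconnected (Ω : Set (ι → ℂ))) (e : ι → ℂ)
    {f : SmoothFn ℂ Ω} (hf : ∀ i, partialDeriv Ω i f = e i • f) : ∃ a : ℂ, f = a • expDot Ω e := by
  have hcancel : expDot Ω e * expDot Ω (-e) = 1 := by
    rw [← expDot_add, add_neg_cancel, expDot_zero]
  obtain ⟨a, ha⟩ := SmoothFn.exists_eq_const_of_partialDeriv_eq_zero hΩ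
    (f := expDot Ω (-e) * f) fun i ↦ by
      rw [Derivation.leibniz, partialDeriv_expDot, hf, smul_eq_mul, smul_eq_mul,
        mul_smul_comm, mul_smul_comm, mul_comm f, Pi.neg_apply, neg_smul, add_neg_cancel]
  refine ⟨a, ?_⟩
  rw [← one_mul f, ← hcancel, mul_assoc, ha, mul_smul_comm, mul_one]

theorem exists_eq_sum_smul_expDot (hΩ : IsPreconnected (Ω : Set (ι → ℂ))) {d : ι → ℂ}
    (hd : Function.Injective d) {f : SmoothFn ℂ Ω}
    (hf : ∀ z, diffOp Ω (∏ i, (MvPolynomial.X i - MvPolynomial.C z)) f = (∏ i, (d i - z)) • f) :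
    ∃ K : (ι → ι) → ℂ, f = ∑ a, K a • expDot Ω (d ∘ a) := by
  obtain ⟨u, hu, hsum⟩ := exists_sum_joint_eigenvectors (diffOp Ω) MvPolynomial.X hd
    fun i ↦ aeval_nodal_apply_eq_zero (diffOp Ω) MvPolynomial.X d hf i
  have hexp : ∀ a, ∃ K : ℂ, u a = K • expDot Ω (d ∘ a) := fun a ↦
    exists_eq_smul_expDot hΩ (d ∘ a) fun i ↦ by rw [← SmoothFn.diffOp_X_apply, hu a i]; rfl
  choose K hK using hexp
  exact ⟨K, hsum.trans (Finset.sum_congr rfl fun a _ ↦ hK a)⟩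

end Exponentials

section RegularLocus

open TopologicalSpace (Opens)

variable {ι : Type*} [Finite ι]

theorem isOpen_setOf_injective : IsOpen {c : ι → ℂ | Function.Injective c} := by
  have hset : {c : ι → ℂ | Function.Injective c} =
      ⋂ i, ⋂ j, ⋂ _ : i ≠ j, {c | c i ≠ c j} := by
    ext c
    simp only [Set.mem_iInter, Set.mem_ofPred_eq]
    exact ⟨fun h i j hij ↦ h.ne hij, fun h i j hc ↦ by_contra fun hij ↦ h i j hij hc⟩
  rw [hset]
  exact isOpen_iInter_of_finite fun i ↦ isOpen_iInter_of_finite fun j ↦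
    isOpen_iInter_of_finite fun _ ↦ isOpen_ne_fun (by fun_prop) (by fun_prop)

variable (ι) in
/-- The open set of vectors with pairwise distinct coordinates. -/
def regularLocus : Opens (ι → ℂ) := ⟨{c | Function.Injective c}, isOpen_setOf_injective⟩

theorem finite_setOf_not_injective_lineMap {a b : ι → ℂ} (ha : Function.Injective a) :
    {z : ℂ | ¬ Function.Injective (AffineMap.lineMap a b z)}.Finite := by
  have hsub : {z : ℂ | ¬ Function.Injective (AffineMap.lineMap a b z)} ⊆
      ⋃ i, ⋃ j, {z : ℂ | i ≠ j ∧ (a i - a j) + z * ((b i - a i) - (b j - a j)) = 0} := by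
    intro z hz
    obtain ⟨i, j, hij, hne⟩ := Function.not_injective_iff.1 hz
    simp only [AffineMap.lineMap_apply, Pi.vadd_apply', vadd_eq_add, vsub_eq_sub,
      Pi.smul_apply, Pi.sub_apply, smul_eq_mul] at hij
    exact Set.mem_iUnion₂.2 ⟨i, j, hne, by linear_combination hij⟩
  refine (Set.finite_iUnion fun i ↦ Set.finite_iUnion fun j ↦ ?_).subset hsub
  refine Set.Subsingleton.finite fun z hz w hw ↦ ?_
  by_contra hzw
  have hslope : (b i - a i) - (b j - a j) = 0 :=
    (mul_eq_zero.1 (show (z - w) * _ = 0 by linear_combination hz.2 - hw.2)).resolve_left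
      (sub_ne_zero.2 hzw)
  exact hz.1 (ha (sub_eq_zero.1 (by simpa [hslope] using hz.2)))

/-- A complex line through two regular points meets the complement of the locus in finitely many
points, and a plane minus a finite set is connected. -/
theorem isPreconnected_regularLocus : IsPreconnected (regularLocus ι : Set (ι → ℂ)) := by
  have := Fintype.ofFinite ι
  refine isPreconnected_of_forall_pair fun a ha b hb ↦ ?_
  let s : Set ℂ := {z | ¬ Function.Injective (AffineMap.lineMap a b z)}
  have hs : IsPreconnected sᶜ :=
    ((finite_setOf_not_injective_lineMap ha).countable.isPathConnected_compl_of_one_lt_rank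
      (by simp)).isConnected.isPreconnected
  refine ⟨AffineMap.lineMap a b '' sᶜ, ?_, ⟨0, ?_, by simp⟩, ⟨1, ?_, by simp⟩, hs.image _ ?_⟩
  · rintro _ ⟨z, hz, rfl⟩
    exact not_not.1 hz
  · simpa [s] using show Function.Injective a from ha
  · simpa [s] using show Function.Injective b from hb
  · exact (AffineMap.lineMap_continuous (R := ℂ)).continuousOn

end RegularLocus

section CoordinatesOnRegularLocus

open scoped ContDiff
open SmoothFn (partialDeriv diffOp)

variable {ι : Type*} [Fintype ι]

/-- The coordinate function `c ↦ c i` on the regular locus. -/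
noncomputable def coord (i : ι) : SmoothFn ℂ (regularLocus ι) :=
  SmoothFn.restrict (fun c ↦ c i) (by fun_prop)

theorem contDiffOn_inv_sub (i j : ι) :
    ContDiffOn ℂ ∞ (fun c : ι → ℂ ↦ (c i - c j)⁻¹) (regularLocus ι) := by
  by_cases hij : i = j
  · simpa [hij] using contDiffOn_const
  · exact ContDiffOn.inv (by fun_prop) fun c hc ↦ sub_ne_zero.2 (hc.ne hij)

/-- The inverse difference `c ↦ (c i - c j)⁻¹` on the regular locus; it is `0` for `i = j`. -/
noncomputable def invSub (i j : ι) : SmoothFn ℂ (regularLocus ι) :=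
  SmoothFn.restrict _ (contDiffOn_inv_sub i j)

theorem isCoordinateSystem_regularLocus [DecidableEq ι] :
    IsCoordinateSystem (diffOp (regularLocus ι)) (partialDeriv (regularLocus ι)) coord invSub where
  map_X_apply := SmoothFn.diffOp_X_apply _
  derivation_coord i j := by
    ext c
    rw [SmoothFn.dirDeriv_apply_of_hasFDerivAt _ (fun _ ↦ rfl)
      (ContinuousLinearMap.proj j : (ι → ℂ) →L[ℂ] ℂ).hasFDerivAt]
    by_cases hij : i = j <;> simp [hij]
  sub_mul_inv i j hij := by
    ext c
    exact mul_inv_cancel₀ (sub_ne_zero.2 (c.2.ne hij))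

end CoordinatesOnRegularLocus

section LaplaceTransform

open TopologicalSpace (Opens)
open scoped ContDiff

variable {ι A : Type*} [Fintype ι] [NormedCommRing A] [NormedAlgebra ℂ A] [CompleteSpace A]

theorem contDiff_exp_sum_smul (b : ι → A) :
    ContDiff ℂ ∞ fun c : ι → ℂ ↦ NormedSpace.exp (∑ i, c i • b i) := by
  have hexp : ContDiff ℂ ∞ (NormedSpace.exp : A → A) :=
    contDiff_iff_contDiffAt.2 fun a ↦ (NormedSpace.exp_analytic a).contDiffAt
  exact hexp.comp (by fun_prop)

theorem hasFDerivAt_exp_sum_smul (b : ι → A) (c : ι → ℂ) :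
    HasFDerivAt (fun c : ι → ℂ ↦ NormedSpace.exp (∑ i, c i • b i))
      (∑ i, (ContinuousLinearMap.proj i : (ι → ℂ) →L[ℂ] ℂ).smulRight
        (NormedSpace.exp (∑ i, c i • b i) * b i)) c := by
  have hsum : HasFDerivAt (fun c : ι → ℂ ↦ ∑ i, c i • b i)
      (∑ i, (ContinuousLinearMap.proj i : (ι → ℂ) →L[ℂ] ℂ).smulRight (b i)) c :=
    HasFDerivAt.fun_sum fun i _ ↦
      (ContinuousLinearMap.proj i : (ι → ℂ) →L[ℂ] ℂ).hasFDerivAt.smul_const (b i)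
  refine (hasFDerivAt_exp.comp c hsum).congr_fderiv ?_
  ext v
  simp [Finset.mul_sum]

/-- The Laplace transform `c ↦ ℓ (a * exp (∑ i, c i • b i))` of an element `a` of a commutative
Banach algebra, such as the algebra of continuous functions on a compact space with the integral
as the functional `ℓ`. It is linear in `a`. -/
noncomputable def laplace (Ω : Opens (ι → ℂ)) (ℓ : A →L[ℂ] ℂ) (b : ι → A) :
    A →ₗ[ℂ] SmoothFn ℂ Ω where
  toFun a := SmoothFn.restrict (fun c ↦ ℓ (a * NormedSpace.exp (∑ i, c i • b i)))
    (ℓ.contDiff.comp (contDiff_const.mul (contDiff_exp_sum_smul b))).contDiffOn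
  map_add' a a' := SmoothFn.ext fun c ↦ by simp [SmoothFn.restrict_apply, add_mul]
  map_smul' z a := SmoothFn.ext fun c ↦ by simp [SmoothFn.restrict_apply]

variable {Ω : Opens (ι → ℂ)} {ℓ : A →L[ℂ] ℂ} {b : ι → A}

theorem laplace_apply (a : A) (c : Ω) :
    laplace Ω ℓ b a c = ℓ (a * NormedSpace.exp (∑ i, (c : ι → ℂ) i • b i)) := rfl

theorem partialDeriv_laplace [DecidableEq ι] (i : ι) (a : A) :
    SmoothFn.partialDeriv Ω i (laplace Ω ℓ b a) = laplace Ω ℓ b (a * b i) := by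
  ext c
  rw [SmoothFn.dirDeriv_apply_of_hasFDerivAt _ (laplace_apply a)
    (ℓ.hasFDerivAt.comp (c : ι → ℂ) ((hasFDerivAt_exp_sum_smul b c).const_mul a))]
  simp [laplace_apply, Pi.single_apply, mul_assoc, mul_comm]

end LaplaceTransform

section BlockExtension

variable {n R : Type*} [Fintype n] [DecidableEq n] [CommRing R]

theorem adjugate_conj {V W : Matrix n n R} (h : W * V = 1) (M : Matrix n n R) :
    (W * M * V).adjugate = W * M.adjugate * V := by
  have h' : V * W = 1 := mul_eq_one_comm.1 h
  have hV : V.adjugate = V.det • W := by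
    rw [← mul_one V.adjugate, ← h', ← mul_assoc, Matrix.adjugate_mul, Matrix.smul_mul, one_mul]
  have hW : W.adjugate = W.det • V := by
    rw [← one_mul W.adjugate, ← h', mul_assoc, Matrix.mul_adjugate, Matrix.mul_smul, mul_one]
  rw [Matrix.adjugate_mul_distrib, Matrix.adjugate_mul_distrib, hV, hW, Matrix.mul_smul,
    Matrix.mul_smul, Matrix.smul_mul, smul_smul, ← Matrix.det_mul, h, Matrix.det_one, one_smul,
    mul_assoc]

variable (R) in
/-- The diagonal projection onto the coordinates in `I`. -/
def coordProj (I : Finset n) : Matrix n n R := Matrix.diagonal fun i ↦ if i ∈ I then 1 else 0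

/-- The block of `B` on rows and columns in `I`, extended by the identity on the remaining
coordinates. Its determinant is the principal minor of `B` on `I`. -/
def blockExtend (I : Finset n) (B : Matrix n n R) : Matrix n n R :=
  coordProj R I * B * coordProj R I + (1 - coordProj R I)

theorem blockExtend_apply (I : Finset n) (B : Matrix n n R) (i j : n) :
    blockExtend I B i j = if i ∈ I then if j ∈ I then B i j else 0 else if i = j then 1 else 0 := by
  by_cases hi : i ∈ I <;> by_cases hij : i = j <;>
    simp_all [blockExtend, coordProj]

theorem blockExtend_empty (B : Matrix n n R) : blockExtend ∅ B = 1 := by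
  ext i j
  simp [blockExtend_apply, Matrix.one_apply]

theorem blockExtend_univ (B : Matrix n n R) : blockExtend Finset.univ B = B := by
  ext i j
  simp [blockExtend_apply]

theorem map_blockExtend {S : Type*} [CommRing S] (f : R →+* S) (I : Finset n) (B : Matrix n n R) :
    (blockExtend I B).map f = blockExtend I (B.map f) := by
  ext i j
  simp [blockExtend_apply, apply_ite f]

theorem blockExtend_conj {V W : Matrix n n R} (h : W * V = 1) {I : Finset n}
    (hV : Commute (coordProj R I) V) (B : Matrix n n R) :
    blockExtend I (W * B * V) = W * blockExtend I B * V := by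
  have h' : V * W = 1 := mul_eq_one_comm.1 h
  have hW : coordProj R I * W = W * coordProj R I := calc
    coordProj R I * W = W * (V * coordProj R I) * W := by rw [← mul_assoc, h, one_mul]
    _ = W * (coordProj R I * V) * W := by rw [hV.eq]
    _ = W * coordProj R I := by rw [mul_assoc, mul_assoc, h', mul_one]
  unfold blockExtend
  rw [mul_add, add_mul, mul_sub, mul_one, sub_mul, h, ← hW, mul_assoc _ W V, h, mul_one]
  simp only [← mul_assoc, hW]
  simp only [mul_assoc, hV.eq]

theorem det_blockExtend_eq_sum {I : Finset n} {i : n} (hi : i ∈ I) (B : Matrix n n R) :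
    (blockExtend I B).det = ∑ k ∈ I, B i k * (blockExtend I B).adjugate k i := by
  rw [Matrix.det_eq_sum_mul_adjugate_row _ i]
  simp [blockExtend_apply, hi]

theorem adjugate_blockExtend_self (I : Finset n) (i : n) (B : Matrix n n R) :
    (blockExtend I B).adjugate i i = (blockExtend (I.erase i) B).det := by
  rw [Matrix.adjugate_apply]
  refine Matrix.det_eq_of_forall_row_eq_smul_add_const
    (fun r ↦ if r ∈ I.erase i then (if i ∈ I then B r i else 0) else 0) i (by simp) fun r l ↦ ?_
  obtain rfl | hr := eq_or_ne r i
  · simp [blockExtend_apply, Pi.single_apply, eq_comm]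
  obtain rfl | hl := eq_or_ne l i
  · simp [blockExtend_apply, hr]
  · simp [blockExtend_apply, hr, hl, hl.symm]

end BlockExtension

section UnitaryInvariance

theorem hasDerivAt_map_exp_neg_mul_mul_map_exp {E F : Type*} [NormedRing E] [NormedAlgebra ℂ E]
    [CompleteSpace E] [NormedRing F] [NormedAlgebra ℂ F] (L : E →A[ℂ] F) (X : E) (M : F) :
    HasDerivAt (fun s : ℂ ↦ L (NormedSpace.exp (s • -X)) * M * L (NormedSpace.exp (s • X)))
      ⁅M, L X⁆ 0 := by
  have hexp (Y : E) := L.toContinuousLinearMap.hasFDerivAt.comp_hasDerivAt (0 : ℂ)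
    (hasDerivAt_exp_smul_const Y (0 : ℂ))
  refine (((hexp (-X)).mul_const M).mul (hexp X)).congr_deriv ?_
  simp [Ring.lie_def, sub_eq_neg_add]

theorem map_eq_zero_of_forall_skewAdjoint {E M : Type*} [Ring E] [StarRing E] [Algebra ℂ E]
    [StarModule ℂ E] [AddCommGroup M] [Module ℂ M] (L : E →ₗ[ℂ] M) {P : E}
    (hL : ∀ X ∈ skewAdjoint E, Commute P X → L X = 0) {X : E} (hX : Commute P X)
    (hX' : Commute P (star X)) : L X = 0 := by
  have hself : ∀ Y ∈ selfAdjoint E, Commute P Y → L Y = 0 := fun Y hY hPY ↦ by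
    have h := hL (Complex.I • Y) ?_ (hPY.smul_right _)
    · simpa using h
    · exact IsSelfAdjoint.smul_mem_skewAdjoint Complex.conj_I hY
  rw [← realPart_add_I_smul_imaginaryPart X, map_add, map_smul, hself _ (realPart X).2,
    hself _ (imaginaryPart X).2, smul_zero, add_zero]
  · rw [imaginaryPart_apply_coe]
    exact ((hX.sub_right hX').smul_right (2⁻¹ : ℝ)).smul_right (-Complex.I)
  · rw [realPart_apply_coe]
    exact (hX.add_right hX').smul_right (2⁻¹ : ℝ)

theorem hasDerivAt_mul_exp {A : Type*} [NormedCommRing A] [NormedAlgebra ℂ A] [CompleteSpace A]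
    {f g : ℂ → A} {f' g' : A} {s : ℂ} (hf : HasDerivAt f f' s) (hg : HasDerivAt g g' s) :
    HasDerivAt (fun s ↦ f s * NormedSpace.exp (g s)) ((f' + f s * g') * NormedSpace.exp (g s)) s :=
  (hf.mul ((hasFDerivAt_exp (𝕂 := ℂ) (x := g s)).comp_hasDerivAt s hg)).congr_deriv <| by
    simp [add_mul, mul_assoc, mul_comm g']

theorem map_exp_sum_smul {ι A : Type*} [Fintype ι] [NormedCommRing A] [NormedAlgebra ℂ A]
    [CompleteSpace A] (ρ : A →A[ℂ] A) (c : ι → ℂ) (b : ι → A) :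
    ρ (NormedSpace.exp (∑ i, c i • b i)) = NormedSpace.exp (∑ i, c i • ρ (b i)) := by
  rw [NormedSpace.map_exp_of_mem_ball (𝕂 := ℂ) ρ ρ.cont _
    ((NormedSpace.expSeries_radius_eq_top ℂ A).symm ▸ edist_lt_top _ _)]
  simp

variable {n A : Type*} [Fintype n] [DecidableEq n] [NormedCommRing A] [NormedAlgebra ℂ A]

variable (A) in
/-- A complex matrix viewed as a matrix over the `ℂ`-algebra `A`. -/
def constMatrix : Matrix n n ℂ →ₐ[ℂ] Matrix n n A := (Algebra.ofId ℂ A).mapMatrix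

/-- Invariance of the law of a random matrix under unitary conjugation. The algebra `A` stands for
the continuous functions on the probability space, the functional `ℓ` for the expectation and the
entries of `B` for the matrix entries; each unitary `V` is required to act on `A` by a substitution
that preserves the expectation and transforms `B` into `V* B V`. -/
def IsUnitarilyInvariant (ℓ : A →L[ℂ] ℂ) (B : Matrix n n A) : Prop :=
  ∀ V ∈ Matrix.unitaryGroup n ℂ, ∃ ρ : A →A[ℂ] A, (∀ a, ℓ (ρ a) = ℓ a) ∧
    B.map ρ = constMatrix A (star V) * B * constMatrix A V

theorem constMatrix_star_mul_self {V : Matrix n n ℂ} (hV : V ∈ Matrix.unitaryGroup n ℂ) :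
    constMatrix A (star V) * constMatrix A V = 1 := by
  rw [← map_mul, Matrix.mem_unitaryGroup_iff'.1 hV, map_one]

theorem constMatrix_coordProj (I : Finset n) : constMatrix A (coordProj ℂ I) = coordProj A I := by
  ext i j
  by_cases hij : i = j <;> simp [constMatrix, coordProj, hij]

open scoped Matrix.Norms.L2Operator in
theorem exp_mem_unitaryGroup {X : Matrix n n ℂ} (hX : X ∈ skewAdjoint (Matrix n n ℂ)) :
    NormedSpace.exp X ∈ Matrix.unitaryGroup n ℂ :=
  let := NormedAlgebra.restrictScalars ℚ ℂ (Matrix n n ℂ)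
  NormedSpace.exp_mem_unitary_of_mem_skewAdjoint hX

namespace IsUnitarilyInvariant

variable {ℓ : A →L[ℂ] ℂ} {B : Matrix n n A}

theorem sub_algebraMap (h : IsUnitarilyInvariant ℓ B) (z : ℂ) :
    IsUnitarilyInvariant ℓ (B - algebraMap ℂ (Matrix n n A) z) := fun V hV ↦ by
  obtain ⟨ρ, hℓ, hB⟩ := h V hV
  refine ⟨ρ, hℓ, ?_⟩
  have hz : (algebraMap ℂ (Matrix n n A) z).map ρ = algebraMap ℂ (Matrix n n A) z :=
    (ρ : A →ₐ[ℂ] A).mapMatrix.commutes z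
  rw [Matrix.map_sub ρ (map_sub ρ), hB, hz, mul_sub, sub_mul, ← Algebra.commutes z,
    mul_assoc (algebraMap ℂ _ z), constMatrix_star_mul_self hV, mul_one]

/-- The expectation of the derivative of `N a b * exp (∑ k, c k • B k k)`, where `N` is the adjugate
of `blockExtend I B`, as `N` and `B` are conjugated by the one-parameter group generated by `X`.
Its vanishing is the Schwinger–Dyson equation of an invariant matrix. -/
noncomputable def schwingerDyson (ℓ : A →L[ℂ] ℂ) (B : Matrix n n A) (c : n → ℂ) (I : Finset n)
    (a b : n) : Matrix n n ℂ →ₗ[ℂ] ℂ where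
  toFun X := ℓ ((⁅(blockExtend I B).adjugate, constMatrix A X⁆ a b +
    (blockExtend I B).adjugate a b * ∑ k, c k • ⁅B, constMatrix A X⁆ k k) *
      NormedSpace.exp (∑ k, c k • B k k))
  map_add' X Y := by
    rw [← map_add, ← add_mul]
    congr 2
    simp only [Ring.lie_def, map_add, mul_add, add_mul, add_sub_add_comm, Matrix.add_apply,
      smul_add, Finset.sum_add_distrib]
    ring
  map_smul' z X := by
    rw [RingHom.id_apply, ← map_smul, ← smul_mul_assoc, smul_add, ← mul_smul_comm, Finset.smul_sum]
    simp only [Ring.lie_def, map_smul, mul_smul_comm, smul_mul_assoc, ← smul_sub,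
      Matrix.smul_apply, smul_comm z]

theorem map_conj_mul_exp [CompleteSpace A] (h : IsUnitarilyInvariant ℓ B) (c : n → ℂ)
    {I : Finset n} (a b : n) {V : Matrix n n ℂ} (hV : V ∈ Matrix.unitaryGroup n ℂ)
    (hIV : Commute (coordProj ℂ I) V) :
    ℓ ((constMatrix A (star V) * (blockExtend I B).adjugate * constMatrix A V) a b *
      NormedSpace.exp (∑ k, c k • (constMatrix A (star V) * B * constMatrix A V) k k)) =
      ℓ ((blockExtend I B).adjugate a b * NormedSpace.exp (∑ k, c k • B k k)) := by
  obtain ⟨ρ, hℓ, hB⟩ := h V hV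
  have hV' := constMatrix_star_mul_self (A := A) hV
  have hIV' : Commute (coordProj A I) (constMatrix A V) :=
    constMatrix_coordProj (A := A) I ▸ hIV.map (constMatrix A)
  have hρN : (blockExtend I (B.map ρ)).adjugate = (blockExtend I B).adjugate.map ρ :=
    (congrArg Matrix.adjugate (map_blockExtend (ρ : A →+* A) I B).symm).trans
      ((ρ : A →+* A).map_adjugate _).symm
  rw [← adjugate_conj hV', ← blockExtend_conj hV' hIV', ← hB, hρN]
  change ℓ (ρ _ * NormedSpace.exp (∑ k, c k • ρ (B k k))) = _
  rw [← map_exp_sum_smul, ← map_mul, hℓ]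

theorem map_exp_sum_comp_perm [CompleteSpace A] (h : IsUnitarilyInvariant ℓ B) (c : n → ℂ)
    (σ : Equiv.Perm n) : ℓ (NormedSpace.exp (∑ i, c (σ i) • B i i)) =
      ℓ (NormedSpace.exp (∑ i, c i • B i i)) := by
  have hσ : σ.permMatrix ℂ ∈ Matrix.unitaryGroup n ℂ := by
    rw [Matrix.mem_unitaryGroup_iff, Matrix.star_eq_conjTranspose, Matrix.conjTranspose_permMatrix,
      ← Matrix.permMatrix_mul]
    simp
  obtain ⟨ρ, hℓ, hB⟩ := h _ hσ
  have hdiag (i : n) : ρ (B (σ i) (σ i)) = B i i := by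
    have := congrFun (congrFun hB (σ i)) (σ i)
    simpa [constMatrix, Matrix.mul_apply, PEquiv.toMatrix_apply, apply_ite, eq_comm] using this
  calc ℓ (NormedSpace.exp (∑ i, c (σ i) • B i i))
      = ℓ (NormedSpace.exp (∑ i, c (σ i) • ρ (B (σ i) (σ i)))) := by simp only [hdiag]
    _ = ℓ (NormedSpace.exp (∑ i, c (σ i) • B (σ i) (σ i))) := by
        rw [← map_exp_sum_smul ρ (fun i ↦ c (σ i)), hℓ]
    _ = ℓ (NormedSpace.exp (∑ i, c i • B i i)) := by
        rw [Equiv.sum_comp σ fun i ↦ c i • B i i]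

open scoped Matrix.Norms.Operator

theorem schwingerDyson_eq_zero_of_mem_skewAdjoint [CompleteSpace A] (h : IsUnitarilyInvariant ℓ B)
    (c : n → ℂ) {I : Finset n} (a b : n) {X : Matrix n n ℂ} (hX : X ∈ skewAdjoint (Matrix n n ℂ))
    (hIX : Commute (coordProj ℂ I) X) : schwingerDyson ℓ B c I a b X = 0 := by
  have hentry (M : Matrix n n A) (i j : n) : HasDerivAt (fun s : ℂ ↦
      (constMatrix A (NormedSpace.exp (s • -X)) * M * constMatrix A (NormedSpace.exp (s • X))) i j)
      (⁅M, constMatrix A X⁆ i j) 0 := by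
    let L : Matrix n n ℂ →A[ℂ] Matrix n n A :=
      ⟨constMatrix A, (constMatrix A).toLinearMap.continuous_of_finiteDimensional⟩
    exact hasDerivAt_pi.1 (hasDerivAt_pi.1 (hasDerivAt_map_exp_neg_mul_mul_map_exp L X M) i) j
  have hderiv := (ℓ.hasFDerivAt.comp_hasDerivAt (0 : ℂ) (hasDerivAt_mul_exp
    (hentry (blockExtend I B).adjugate a b) (HasDerivAt.fun_sum (u := Finset.univ) fun k _ ↦
      (hentry B k k).const_smul (c k)))).comp_ofReal (z := 0)
  have hconst : HasDerivAt (fun s : ℝ ↦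
      ℓ ((constMatrix A (NormedSpace.exp ((s : ℂ) • -X)) * (blockExtend I B).adjugate *
      constMatrix A (NormedSpace.exp ((s : ℂ) • X))) a b * NormedSpace.exp (∑ k, c k •
      (constMatrix A (NormedSpace.exp ((s : ℂ) • -X)) * B *
      constMatrix A (NormedSpace.exp ((s : ℂ) • X))) k k))) 0 0 := by
    refine (hasDerivAt_const 0 (ℓ ((blockExtend I B).adjugate a b *
      NormedSpace.exp (∑ k, c k • B k k)))).congr_of_eventuallyEq (.of_forall fun s ↦ ?_)
    have hsX : (s : ℂ) • X ∈ skewAdjoint (Matrix n n ℂ) := by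
      simpa using skewAdjoint.smul_mem s hX
    have hstar : star (NormedSpace.exp ((s : ℂ) • X)) = NormedSpace.exp ((s : ℂ) • -X) := by
      rw [Matrix.star_eq_conjTranspose, ← Matrix.exp_conjTranspose, ← Matrix.star_eq_conjTranspose,
        skewAdjoint.mem_iff.1 hsX, smul_neg]
    have := h.map_conj_mul_exp c a b (exp_mem_unitaryGroup hsX) (hIX.smul_right _).exp_right
    rwa [hstar] at this
  simpa [schwingerDyson] using hderiv.unique hconst

end IsUnitarilyInvariant

end UnitaryInvariance

section RadialEquations

open TopologicalSpace (Opens)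
open SmoothFn (partialDeriv diffOp)

theorem commute_coordProj_single {n R : Type*} [Fintype n] [DecidableEq n] [CommRing R]
    {I : Finset n} {i j : n} (hi : i ∈ I) (hj : j ∈ I) (x : R) :
    Commute (coordProj R I) (Matrix.single i j x) := by
  ext r l
  by_cases h : i = r ∧ j = l
  · obtain ⟨rfl, rfl⟩ := h
    simp [coordProj, hi, hj]
  · simp [coordProj, h]

variable {n A : Type*} [Fintype n] [DecidableEq n] [NormedCommRing A] [NormedAlgebra ℂ A]
  [CompleteSpace A] {ℓ : A →L[ℂ] ℂ} {B : Matrix n n A}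

namespace IsUnitarilyInvariant

theorem sub_mul_laplace_mul_adjugate (h : IsUnitarilyInvariant ℓ B) {I : Finset n} {i j : n}
    (hi : i ∈ I) (hj : j ∈ I) {Ω : Opens (n → ℂ)} (c : Ω) :
    (c.1 i - c.1 j) * laplace Ω ℓ (fun k ↦ B k k) (B i j * (blockExtend I B).adjugate j i) c =
      laplace Ω ℓ (fun k ↦ B k k) ((blockExtend I B).adjugate i i) c -
        laplace Ω ℓ (fun k ↦ B k k) ((blockExtend I B).adjugate j j) c := by
  have hSD : schwingerDyson ℓ B c.1 I j i (Matrix.single j i 1) = 0 :=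
    map_eq_zero_of_forall_skewAdjoint _
      (fun X hX hIX ↦ h.schwingerDyson_eq_zero_of_mem_skewAdjoint c.1 j i hX hIX)
      (commute_coordProj_single hj hi 1) <| by
        simpa [Matrix.star_eq_conjTranspose] using commute_coordProj_single hi hj 1
  have hsingle : constMatrix A (Matrix.single j i 1) = Matrix.single j i 1 := by
    simp [constMatrix]
  have hadj : ∀ N : Matrix n n A, ⁅N, Matrix.single j i (1 : A)⁆ j i = N j j - N i i := fun N ↦ by
    simp [Ring.lie_def]
  have hdiag : ∑ k, c.1 k • ⁅B, Matrix.single j i (1 : A)⁆ k k = (c.1 i - c.1 j) • B i j := by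
    simp [Ring.lie_def, Matrix.mul_apply, Matrix.single_apply, ite_and, smul_sub, sub_smul,
      Finset.sum_sub_distrib]
  simp only [laplace_apply]
  rw [← smul_eq_mul, ← map_smul, ← map_sub, ← sub_eq_zero, ← map_sub, ← hSD]
  simp only [schwingerDyson, LinearMap.coe_mk, AddHom.coe_mk, hsingle, hadj, hdiag]
  congr 1
  simp only [mul_smul_comm, add_mul, sub_mul, smul_mul_assoc, mul_comm (B i j)]
  abel

theorem laplace_det_blockExtend_eq (h : IsUnitarilyInvariant ℓ B) {I : Finset n} {i : n}
    (hi : i ∈ I) :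
    laplace (regularLocus n) ℓ (fun k ↦ B k k) (blockExtend I B).det =
      partialDeriv (regularLocus n) i
        (laplace (regularLocus n) ℓ (fun k ↦ B k k) (blockExtend (I.erase i) B).det) +
      ∑ j ∈ I.erase i, invSub i j *
        (laplace (regularLocus n) ℓ (fun k ↦ B k k) (blockExtend (I.erase i) B).det -
          laplace (regularLocus n) ℓ (fun k ↦ B k k) (blockExtend (I.erase j) B).det) := by
  rw [det_blockExtend_eq_sum hi, ← Finset.add_sum_erase _ _ hi, map_add, map_sum,
    partialDeriv_laplace, adjugate_blockExtend_self, mul_comm (B i i)]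
  refine congrArg _ (Finset.sum_congr rfl fun j hj ↦ ?_)
  ext c
  have hne : c.1 i - c.1 j ≠ 0 := sub_ne_zero.2 (c.2.ne (Finset.ne_of_mem_erase hj).symm)
  have hSD := h.sub_mul_laplace_mul_adjugate hi (Finset.mem_of_mem_erase hj) c
  rw [adjugate_blockExtend_self, adjugate_blockExtend_self] at hSD
  change _ = (c.1 i - c.1 j)⁻¹ * (_ - _)
  rw [← hSD, inv_mul_cancel_left₀ hne]

end IsUnitarilyInvariant

end RadialEquations

section ExponentialSum

open TopologicalSpace (Opens)
open SmoothFn (partialDeriv diffOp)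

variable {n A : Type*} [Fintype n] [LinearOrder n] [NormedCommRing A] [NormedAlgebra ℂ A]
  [CompleteSpace A] {ℓ : A →L[ℂ] ℂ} {B : Matrix n n A}

theorem laplace_sub_algebraMap {ι : Type*} [Fintype ι] {Ω : Opens (ι → ℂ)} (b : ι → A) (z : ι → ℂ)
    (a : A) : laplace Ω ℓ (fun i ↦ b i - algebraMap ℂ A (z i)) a =
      expDot Ω (-z) * laplace Ω ℓ b a := by
  let := NormedAlgebra.restrictScalars ℚ ℂ A
  ext c
  have hsum : ∑ i, c.1 i • (b i - algebraMap ℂ A (z i)) =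
      algebraMap ℂ A (c.1 ⬝ᵥ -z) + ∑ i, c.1 i • b i := by
    simp [Algebra.smul_def, mul_sub, dotProduct, neg_add_eq_sub]
  change ℓ _ = Complex.exp (c.1 ⬝ᵥ -z) * ℓ _
  rw [hsum, NormedSpace.exp_add, ← NormedSpace.algebraMap_exp_comm, ← Complex.exp_eq_exp_ℂ,
    mul_left_comm, ← Algebra.smul_def, map_smul, smul_eq_mul]

variable (n) in
/-- The Vandermonde product `∏ i < j, (c j - c i)` as a function of `c` on the regular locus. -/
noncomputable def coordVandermonde : SmoothFn ℂ (regularLocus n) :=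
  ∏ q : n × n with q.1 < q.2, (coord q.2 - coord q.1)

namespace IsUnitarilyInvariant

theorem coordVandermonde_mul_laplace_det (h : IsUnitarilyInvariant ℓ B) :
    coordVandermonde n * laplace (regularLocus n) ℓ (fun k ↦ B k k) B.det =
      diffOp (regularLocus n) (∏ i, MvPolynomial.X i)
        (coordVandermonde n * laplace (regularLocus n) ℓ (fun k ↦ B k k) 1) := by
  have H := isCoordinateSystem_regularLocus (ι := n)
  have hrec := H.mul_eq_mixed_of_recursion (v := coordVandermonde n)
    (f := fun I ↦ laplace (regularLocus n) ℓ (fun k ↦ B k k) (blockExtend I B).det)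
    (fun I i hi ↦ h.laplace_det_blockExtend_eq hi) Finset.univ
    fun i _ ↦ H.derivation_prod_lt_sub i
  simpa only [blockExtend_univ, blockExtend_empty, Matrix.det_one] using hrec

variable {d : n → ℂ}

theorem diffOp_coordVandermonde_mul_laplace_one (h : IsUnitarilyInvariant ℓ B)
    (hB : ∀ z, (B - algebraMap ℂ (Matrix n n A) z).det = algebraMap ℂ A (∏ i, (d i - z))) (z : ℂ) :
    diffOp (regularLocus n) (∏ i, (MvPolynomial.X i - MvPolynomial.C z))
        (coordVandermonde n * laplace (regularLocus n) ℓ (fun k ↦ B k k) 1) =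
      (∏ i, (d i - z)) • (coordVandermonde n * laplace (regularLocus n) ℓ (fun k ↦ B k k) 1) := by
  have hshift (a : A) : laplace (regularLocus n) ℓ (fun k ↦ (B - algebraMap ℂ _ z) k k) a =
      expDot _ (-Function.const n z) * laplace (regularLocus n) ℓ (fun k ↦ B k k) a := by
    simpa [Matrix.algebraMap_matrix_apply] using
      laplace_sub_algebraMap (fun k ↦ B k k) (Function.const n z) a
  have hcancel : expDot (regularLocus n) (Function.const n z) * expDot _ (-Function.const n z) =
      1 := by
    rw [← expDot_add, add_neg_cancel, expDot_zero]
  have hmain := (h.sub_algebraMap z).coordVandermonde_mul_laplace_det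
  rw [hshift, hshift, hB, Algebra.algebraMap_eq_smul_one, map_smul,
    mul_left_comm, mul_left_comm (coordVandermonde n), diffOp_prod_expDot_mul] at hmain
  simpa [← mul_assoc, hcancel, ← sub_eq_add_neg] using
    congrArg (expDot _ (Function.const n z) * ·) hmain.symm

theorem exists_coordVandermonde_mul_laplace_one_eq (h : IsUnitarilyInvariant ℓ B)
    (hB : ∀ z, (B - algebraMap ℂ (Matrix n n A) z).det = algebraMap ℂ A (∏ i, (d i - z)))
    (hd : Function.Injective d) : ∃ K : (n → n) → ℂ,
      coordVandermonde n * laplace (regularLocus n) ℓ (fun k ↦ B k k) 1 =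
        ∑ a, K a • expDot (regularLocus n) (d ∘ a) :=
  exists_eq_sum_smul_expDot isPreconnected_regularLocus hd
    (h.diffOp_coordVandermonde_mul_laplace_one hB)

end IsUnitarilyInvariant

end ExponentialSum

section Antisymmetrization

variable {n : Type*} [Fintype n] [DecidableEq n]

theorem sum_sign_mul_exp_comp_perm (c d : n → ℂ) (a : n → n) :
    ∑ σ : Equiv.Perm n, (σ.sign : ℂ) * Complex.exp ((c ∘ σ) ⬝ᵥ (d ∘ a)) =
      (Matrix.of fun i j ↦ Complex.exp (c i * d j)).det *
        ((1 : Matrix n n ℂ).submatrix id a).det := by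
  have hmul : (Matrix.of fun i j ↦ Complex.exp (c i * d j)) * (1 : Matrix n n ℂ).submatrix id a =
      Matrix.of fun i j ↦ Complex.exp (c i * d (a j)) := by
    ext i j
    simp [Matrix.mul_apply, Matrix.one_apply]
  rw [← Matrix.det_mul, hmul, Matrix.det_apply']
  simp [dotProduct, Complex.exp_sum]

theorem exists_eq_mul_det_of_alternating {d : n → ℂ} {K : (n → n) → ℂ} {F : (n → ℂ) → ℂ}
    (hF : ∀ c, Function.Injective c → F c = ∑ a, K a * Complex.exp (c ⬝ᵥ (d ∘ a)))
    (hperm : ∀ c (σ : Equiv.Perm n), F (c ∘ σ) = σ.sign * F c) :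
    ∃ κ : ℂ, ∀ c, Function.Injective c →
      F c = κ * (Matrix.of fun i j ↦ Complex.exp (c i * d j)).det := by
  have hcard : ((Fintype.card n).factorial : ℂ) ≠ 0 := by
    exact_mod_cast Nat.factorial_ne_zero _
  refine ⟨(∑ a, K a * ((1 : Matrix n n ℂ).submatrix id a).det) / (Fintype.card n).factorial,
    fun c hc ↦ ?_⟩
  have hsign (σ : Equiv.Perm n) : (σ.sign : ℂ) * F (c ∘ σ) = F c := by
    rw [hperm, ← mul_assoc, ← Int.cast_mul, ← Units.val_mul, Int.units_mul_self]
    simp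
  have hsum : ((Fintype.card n).factorial : ℂ) * F c =
      ∑ σ : Equiv.Perm n, (σ.sign : ℂ) * F (c ∘ σ) := by
    simp [hsign, Fintype.card_perm]
  rw [div_mul_eq_mul_div, eq_div_iff hcard, mul_comm (F c), hsum]
  calc ∑ σ : Equiv.Perm n, (σ.sign : ℂ) * F (c ∘ σ)
      = ∑ a, K a * ∑ σ : Equiv.Perm n, (σ.sign : ℂ) * Complex.exp ((c ∘ σ) ⬝ᵥ (d ∘ a)) := by
        simp only [hF _ (hc.comp (Equiv.injective _)), Finset.mul_sum, mul_left_comm]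
        exact Finset.sum_comm
    _ = (∑ a, K a * ((1 : Matrix n n ℂ).submatrix id a).det) *
          (Matrix.of fun i j ↦ Complex.exp (c i * d j)).det := by
        simp only [sum_sign_mul_exp_comp_perm, Finset.sum_mul, mul_assoc]
        exact Finset.sum_congr rfl fun a _ ↦ congrArg (K a * ·) (mul_comm _ _)

end Antisymmetrization

section Vandermonde

open Filter Topology

variable {p : ℕ}

theorem vandermonde_eq_det_vandermonde (v : Fin p → ℂ) :
    vandermonde p v = (Matrix.vandermonde v).det := by
  rw [Matrix.det_vandermonde, vandermonde, Finset.prod_filter, Fintype.prod_prod_type]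
  simp only [← Finset.prod_filter, Finset.filter_lt_eq_Ioi]

theorem vandermonde_ne_zero {v : Fin p → ℂ} (hv : Function.Injective v) : vandermonde p v ≠ 0 := by
  rwa [vandermonde_eq_det_vandermonde, Matrix.det_vandermonde_ne_zero_iff]

theorem vandermonde_comp_perm (v : Fin p → ℂ) (σ : Equiv.Perm (Fin p)) :
    vandermonde p (v ∘ σ) = σ.sign * vandermonde p v := by
  rw [vandermonde_eq_det_vandermonde, vandermonde_eq_det_vandermonde, ← Matrix.det_permute]
  rfl

theorem vandermonde_smul (s : ℂ) (v : Fin p → ℂ) :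
    vandermonde p (s • v) = s ^ (p * (p - 1) / 2) * vandermonde p v := by
  have hdiag : Matrix.vandermonde (s • v) =
      Matrix.vandermonde v * Matrix.diagonal fun i : Fin p ↦ s ^ (i : ℕ) := by
    ext i j
    simp [mul_pow, mul_comm]
  rw [vandermonde_eq_det_vandermonde, vandermonde_eq_det_vandermonde, hdiag, Matrix.det_mul,
    Matrix.det_diagonal, Finset.prod_pow_eq_pow_sum, Fin.sum_univ_eq_sum_range fun i ↦ i,
    Finset.sum_range_id, mul_comm]

theorem vandermonde_natCast : vandermonde p (fun i ↦ ((i : ℕ) : ℂ)) =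
    ∏ j ∈ Finset.range p, (j.factorial : ℂ) := by
  cases p with
  | zero => simp [vandermonde]
  | succ n =>
    rw [vandermonde_eq_det_vandermonde, Matrix.det_vandermonde_id_eq_superFactorial,
      ← Nat.prod_range_factorial_succ, Finset.prod_range_succ']
    push_cast
    simp

theorem det_exp_natCast_mul (d : Fin p → ℂ) (s : ℂ) :
    (Matrix.of fun i j : Fin p ↦ Complex.exp (s * (i : ℕ) * d j)).det =
      vandermonde p fun j ↦ Complex.exp (s * d j) := by
  rw [vandermonde_eq_det_vandermonde, ← Matrix.det_transpose]
  congr 1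
  ext i j
  simp [← Complex.exp_nat_mul, mul_assoc, mul_left_comm]

theorem tendsto_vandermonde_exp_div (d : Fin p → ℂ) :
    Tendsto (fun s : ℂ ↦ vandermonde p (fun j ↦ Complex.exp (s * d j)) / s ^ (p * (p - 1) / 2))
      (𝓝[≠] 0) (𝓝 (vandermonde p d)) := by
  have hslope (x y : ℂ) :
      Tendsto (fun s : ℂ ↦ s⁻¹ * Complex.exp (s * y) - s⁻¹ * Complex.exp (s * x))
        (𝓝[≠] 0) (𝓝 (y - x)) := by
    have hexp (x : ℂ) : HasDerivAt (fun s : ℂ ↦ Complex.exp (s * x)) x 0 := by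
      simpa using ((hasDerivAt_id (0 : ℂ)).mul_const x).cexp
    refine ((hexp y).sub (hexp x)).tendsto_slope.congr fun s ↦ ?_
    simp [slope_def_field, div_eq_inv_mul, mul_sub]
  refine (tendsto_finsetProd _ fun q _ ↦ hslope (d q.1) (d q.2)).congr fun s ↦ ?_
  rw [div_eq_inv_mul, ← inv_pow, ← vandermonde_smul]
  rfl

/-- The factor `∏ j, j!` comes from letting `c = s • (0, 1, …, p - 1)` tend to `0`, where both
determinants become Vandermonde determinants. -/
theorem prod_factorial_eq_mul_vandermonde {F : (Fin p → ℂ) → ℂ} (hF : Continuous F)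
    (hF0 : F 0 = 1) {κ : ℂ} {d : Fin p → ℂ}
    (h : ∀ c, Function.Injective c → vandermonde p c * F c =
      κ * (Matrix.of fun i j : Fin p ↦ Complex.exp (c i * d j)).det) :
    ∏ j ∈ Finset.range p, (j.factorial : ℂ) = κ * vandermonde p d := by
  let v : Fin p → ℂ := fun i ↦ (i : ℕ)
  have hv : Function.Injective v := Nat.cast_injective.comp Fin.val_injective
  have hleft : Tendsto (fun s : ℂ ↦ vandermonde p v * F (s • v)) (𝓝[≠] 0)
      (𝓝 (vandermonde p v)) := by
    have hcont : Continuous fun s : ℂ ↦ vandermonde p v * F (s • v) := by fun_prop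
    simpa [hF0] using (hcont.tendsto 0).mono_left nhdsWithin_le_nhds
  rw [← vandermonde_natCast]
  refine tendsto_nhds_unique hleft (((tendsto_vandermonde_exp_div d).const_mul κ).congr' ?_)
  filter_upwards [self_mem_nhdsWithin] with s (hs : s ≠ 0)
  have hsv := h (s • v) ((smul_right_injective ℂ hs).comp hv)
  simp only [vandermonde_smul, Pi.smul_apply, smul_eq_mul, v, det_exp_natCast_mul] at hsv
  rw [← mul_div_assoc, ← hsv]
  field_simp
  rfl

end Vandermonde

section VandermondeFormula

variable {p : ℕ} {A : Type*} [NormedCommRing A] [NormedAlgebra ℂ A] [CompleteSpace A]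
  {ℓ : A →L[ℂ] ℂ} {B : Matrix (Fin p) (Fin p) A} {d : Fin p → ℂ}

theorem coordVandermonde_apply (c : regularLocus (Fin p)) :
    coordVandermonde (Fin p) c = vandermonde p c := by
  simp [coordVandermonde, vandermonde, coord]

theorem IsUnitarilyInvariant.vandermonde_mul_vandermonde_mul_map_exp
    (h : IsUnitarilyInvariant ℓ B) (hℓ : ℓ 1 = 1)
    (hB : ∀ z, (B - algebraMap ℂ (Matrix (Fin p) (Fin p) A) z).det =
      algebraMap ℂ A (∏ i, (d i - z)))
    (hd : Function.Injective d) {c : Fin p → ℂ} (hc : Function.Injective c) :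
    vandermonde p c * vandermonde p d * ℓ (NormedSpace.exp (∑ i, c i • B i i)) =
      (∏ j ∈ Finset.range p, (j.factorial : ℂ)) *
        (Matrix.of fun i j : Fin p ↦ Complex.exp (c i * d j)).det := by
  obtain ⟨K, hK⟩ := h.exists_coordVandermonde_mul_laplace_one_eq hB hd
  have hsum (c : Fin p → ℂ) (hc : Function.Injective c) :
      vandermonde p c * ℓ (NormedSpace.exp (∑ i, c i • B i i)) =
        ∑ a, K a * Complex.exp (c ⬝ᵥ (d ∘ a)) := by
    simpa [coordVandermonde_apply, laplace_apply, expDot_apply] using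
      congrArg (fun f : SmoothFn ℂ (regularLocus (Fin p)) ↦ f ⟨c, hc⟩) hK
  obtain ⟨κ, hκ⟩ := exists_eq_mul_det_of_alternating hsum fun c σ ↦ by
    simp only [vandermonde_comp_perm, Function.comp_apply, h.map_exp_sum_comp_perm c σ, mul_assoc]
  have hfactorial := prod_factorial_eq_mul_vandermonde
    (ℓ.continuous.comp (contDiff_exp_sum_smul fun i ↦ B i i).continuous) (by simp [hℓ]) hκ
  rw [hfactorial, mul_right_comm, hκ c hc, mul_right_comm]

end VandermondeFormula

section UnitaryGroup

theorem isMulRightInvariant_of_isProbabilityMeasure {G : Type*} [Group G] [TopologicalSpace G]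
    [IsTopologicalGroup G] [LocallyCompactSpace G] [MeasurableSpace G] [BorelSpace G]
    (μ : Measure G) [μ.IsHaarMeasure] [IsProbabilityMeasure μ] : μ.IsMulRightInvariant :=
  ⟨fun g ↦
    have := Measure.isProbabilityMeasure_map (μ := μ) (continuous_mul_const g).aemeasurable
    Measure.isHaarMeasure_eq_of_isProbabilityMeasure _ _⟩

/-- The integral as a continuous linear functional on the continuous functions on a compact
space. -/
noncomputable def continuousMapIntegral {X : Type*} [TopologicalSpace X] [CompactSpace X]
    [MeasurableSpace X] [OpensMeasurableSpace X] (μ : Measure X) [IsFiniteMeasure μ] :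
    C(X, ℂ) →L[ℂ] ℂ :=
  LinearMap.mkContinuous
    { toFun f := ∫ x, f x ∂μ
      map_add' f g := integral_add (f.continuous.integrable_of_hasCompactSupport
        (.of_compactSpace f)) (g.continuous.integrable_of_hasCompactSupport (.of_compactSpace g))
      map_smul' z f := integral_const_mul z f }
    (μ.real Set.univ) fun f ↦ by
      rw [mul_comm]
      exact norm_integral_le_of_norm_le_const (.of_forall f.norm_coe_le_norm)

variable {n : Type*} [Fintype n] [DecidableEq n]

open scoped Matrix.Norms.L2Operator in
instance compactSpace_unitaryGroup : CompactSpace (Matrix.unitaryGroup n ℂ) := by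
  refine isCompact_iff_compactSpace.1 (Metric.isCompact_of_isClosed_isBounded isClosed_unitary ?_)
  refine (Metric.isBounded_closedBall (x := 0) (r := ‖(1 : Matrix n n ℂ)‖)).subset fun U hU ↦ ?_
  simpa using (CStarRing.norm_mem_unitary_mul 1 hU).le

/-- The matrix `U* diag(d) U` as a matrix of continuous functions of the unitary matrix `U`. -/
def conjDiagonal (d : n → ℂ) : Matrix n n C(Matrix.unitaryGroup n ℂ, ℂ) :=
  Matrix.of fun i j ↦ ⟨fun U ↦ (star U.1 * Matrix.diagonal d * U.1) i j, by fun_prop⟩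

theorem conjDiagonal_apply (d : n → ℂ) (i j : n) (U : Matrix.unitaryGroup n ℂ) :
    conjDiagonal d i j U = (star U.1 * Matrix.diagonal d * U.1) i j := rfl

theorem det_conjDiagonal_sub_algebraMap (d : n → ℂ) (z : ℂ) :
    (conjDiagonal d - algebraMap ℂ (Matrix n n C(Matrix.unitaryGroup n ℂ, ℂ)) z).det =
      algebraMap ℂ C(Matrix.unitaryGroup n ℂ, ℂ) (∏ i, (d i - z)) := by
  ext U
  have hU : star U.1 * U.1 = 1 := Matrix.mem_unitaryGroup_iff'.1 U.2
  have hconj : (conjDiagonal d - algebraMap ℂ (Matrix n n C(Matrix.unitaryGroup n ℂ, ℂ)) z).map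
      (ContinuousMap.evalAlgHom ℂ ℂ U) = star U.1 * Matrix.diagonal (fun i ↦ d i - z) * U.1 := by
    have hsub : Matrix.diagonal (fun i ↦ d i - z) =
        Matrix.diagonal d - algebraMap ℂ (Matrix n n ℂ) z := by
      rw [Matrix.algebraMap_eq_diagonal, Matrix.diagonal_sub]
      rfl
    rw [hsub, mul_sub, sub_mul, ← Algebra.commutes z, mul_assoc (algebraMap ℂ _ z), hU, mul_one,
      Matrix.map_sub _ (map_sub _)]
    congr 1
    exact (ContinuousMap.evalAlgHom ℂ ℂ U).mapMatrix.commutes z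
  calc _ = (star U.1 * Matrix.diagonal (fun i ↦ d i - z) * U.1).det :=
        hconj ▸ (ContinuousMap.evalAlgHom ℂ ℂ U).map_det _
    _ = ∏ i, (d i - z) := by
        rw [Matrix.det_mul_right_comm, hU, one_mul, Matrix.det_diagonal]

theorem isUnitarilyInvariant_conjDiagonal [MeasurableSpace (Matrix.unitaryGroup n ℂ)]
    [BorelSpace (Matrix.unitaryGroup n ℂ)] (μ : Measure (Matrix.unitaryGroup n ℂ))
    [μ.IsMulRightInvariant] [IsFiniteMeasure μ] (d : n → ℂ) :
    IsUnitarilyInvariant (continuousMapIntegral μ) (conjDiagonal d) := fun V hV ↦ by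
  let τ : C(Matrix.unitaryGroup n ℂ, Matrix.unitaryGroup n ℂ) := ⟨(· * ⟨V, hV⟩), by fun_prop⟩
  refine ⟨⟨ContinuousMap.compRightAlgHom ℂ ℂ τ, ContinuousMap.compRightAlgHom_continuous _ _ _⟩,
    fun f ↦ integral_mul_right_eq_self f _, ?_⟩
  ext i j U
  have heval : (constMatrix _ (star V) * conjDiagonal d * constMatrix _ V).map
      (ContinuousMap.evalAlgHom ℂ ℂ U) = star V * (star U.1 * Matrix.diagonal d * U.1) * V := by
    rw [Matrix.map_mul, Matrix.map_mul]
    rfl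
  calc conjDiagonal d i j (U * ⟨V, hV⟩)
      = (star V * (star U.1 * Matrix.diagonal d * U.1) * V) i j := by
        simp [conjDiagonal_apply, mul_assoc]
    _ = _ := by rw [← heval]; rfl

theorem exp_sum_smul_conjDiagonal_apply (c d : n → ℂ) (U : Matrix.unitaryGroup n ℂ) :
    NormedSpace.exp (∑ i, c i • conjDiagonal d i i) U =
      Complex.exp (Matrix.diagonal c * (star U.1 * Matrix.diagonal d * U.1)).trace := by
  have hexp (f : C(Matrix.unitaryGroup n ℂ, ℂ)) : NormedSpace.exp f U = Complex.exp (f U) := by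
    rw [NormedSpace.exp_continuousMap_eq, Complex.exp_eq_exp_ℂ]
    rfl
  simp [hexp, Matrix.trace, conjDiagonal_apply]

end UnitaryGroup

theorem harish_chandra_itzykson_zuber_general (p : ℕ) (t : ℂ) (ht : t ≠ 0)
    (C : Matrix (Fin p) (Fin p) ℂ) (c : Fin p → ℂ) (hc : Function.Injective c)
    (hC : ∃ U₀ : Matrix.unitaryGroup (Fin p) ℂ,
      C = (U₀ : Matrix (Fin p) (Fin p) ℂ) * Matrix.diagonal c *
            star (U₀ : Matrix (Fin p) (Fin p) ℂ))
    (d : Fin p → ℂ) (hd : Function.Injective d) (μ : Measure (Matrix.unitaryGroup (Fin p) ℂ))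
    [μ.IsHaarMeasure] [IsProbabilityMeasure μ] :
    (∫ U : Matrix.unitaryGroup (Fin p) ℂ,
        Complex.exp (t * Matrix.trace (C * star (U : Matrix (Fin p) (Fin p) ℂ) *
          Matrix.diagonal d * (U : Matrix (Fin p) (Fin p) ℂ))) ∂μ)
      = ((∏ j ∈ Finset.range p, (Nat.factorial j : ℂ)) *
          (Matrix.of fun i j : Fin p => Complex.exp (t * c i * d j)).det) /
        (t ^ (p * (p - 1) / 2) * vandermonde p c * vandermonde p d) := by
  obtain ⟨U₀, rfl⟩ := hC
  have := isMulRightInvariant_of_isProbabilityMeasure μ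
  have htrace (U : Matrix.unitaryGroup (Fin p) ℂ) :
      Complex.exp (t * Matrix.trace (U₀.1 * Matrix.diagonal c * star U₀.1 * star U.1 *
        Matrix.diagonal d * U.1)) =
      NormedSpace.exp (∑ i, (t • c) i • conjDiagonal d i i) (U * U₀) := by
    have hsmul : Matrix.diagonal (t • c) = t • Matrix.diagonal c := by simp
    rw [exp_sum_smul_conjDiagonal_apply, hsmul, smul_mul_assoc, Matrix.trace_smul, smul_eq_mul,
      Matrix.mul_assoc, Matrix.mul_assoc, Matrix.mul_assoc, Matrix.mul_assoc, Matrix.trace_mul_comm]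
    simp [mul_assoc]
  have hinj : Function.Injective (t • c) := (smul_right_injective ℂ ht).comp hc
  have hmain := (isUnitarilyInvariant_conjDiagonal μ d).vandermonde_mul_vandermonde_mul_map_exp
    (by simp [continuousMapIntegral]) (det_conjDiagonal_sub_algebraMap d) hd hinj
  rw [vandermonde_smul] at hmain
  have hintegral := integral_mul_right_eq_self (μ := μ)
    (NormedSpace.exp (∑ i, (t • c) i • conjDiagonal d i i) : C(Matrix.unitaryGroup (Fin p) ℂ, ℂ)) U₀
  rw [integral_congr_ae (.of_forall htrace), hintegral, eq_div_iff (mul_ne_zero (mul_ne_zero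
    (pow_ne_zero _ ht) (vandermonde_ne_zero hc)) (vandermonde_ne_zero hd)), mul_comm]
  exact hmain

/-- Harish-Chandra/Itzykson–Zuber: for `t ≠ 0`, a normal matrix `C` with
distinct eigenvalues `c₁,…,c_p` (encoded by a unitary diagonalization `C = U₀ diag(c) U₀*`
with `c` injective) and `D = diag(d₁,…,d_p)` with distinct real `d_i`,
`∫_{U(p)} exp{t·Tr(C U* D U)} dμ(U)
  = (∏_{j=1}^{p−1} j!)·det[e^{t c_i d_j}] / (t^{p(p−1)/2}·Δ(c)·Δ(d))`,
where `μ` is the normalized Haar probability measure on `U(p)`. -/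
theorem harish_chandra_itzykson_zuber (p : ℕ) (hp : 1 ≤ p) (t : ℂ) (ht : t ≠ 0)
    (C : Matrix (Fin p) (Fin p) ℂ) (c : Fin p → ℂ) (hc : Function.Injective c)
    (hC : ∃ U₀ : Matrix.unitaryGroup (Fin p) ℂ,
      C = (U₀ : Matrix (Fin p) (Fin p) ℂ) * Matrix.diagonal c *
            star (U₀ : Matrix (Fin p) (Fin p) ℂ))
    (d : Fin p → ℝ) (hd : Function.Injective d)
    (μ : Measure (Matrix.unitaryGroup (Fin p) ℂ))
    [μ.IsHaarMeasure] [IsProbabilityMeasure μ] :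
    (∫ U : Matrix.unitaryGroup (Fin p) ℂ,
        Complex.exp (t * Matrix.trace (C * star (U : Matrix (Fin p) (Fin p) ℂ) *
          Matrix.diagonal (fun i => (d i : ℂ)) * (U : Matrix (Fin p) (Fin p) ℂ))) ∂μ)
      = ((∏ j ∈ Finset.range p, (Nat.factorial j : ℂ)) *
          (Matrix.of fun i j : Fin p => Complex.exp (t * c i * (d j : ℂ))).det) /
        (t^(p*(p-1)/2) * vandermonde p c * vandermonde p (fun i => (d i : ℂ))) :=
  harish_chandra_itzykson_zuber_general p t ht C c hc hC (fun i ↦ (d i : ℂ))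
    (Complex.ofReal_injective.comp hd) μ
end
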